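/- arXiv:1409.2333 — 3 statements merged into one kernel-verified Lean document; each statement's English description precedes it below -/
import Mathlib

section
/- Let n be an odd positive integer and θ ∈ (0,π/4]. For each x ≤ t_{n,1}, let y(x) denote the unique zero of the function y ↦ Φ^θ_n(x,y) in the interval [t_{n,n}, ∞). Then the nodal arc so defined is asymptotic to a line: lim_{x → −∞} y(x)/x = −(cot θ)^{1/n}. -/
/-- The physicist's Hermite polynomials: `H 0 = 1`, `H 1 = 2X`,
`H (n+2) = 2X · H (n+1) - 2(n+1) · H n`. -/
noncomputable def H : ℕ → Polynomial ℝ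
  | 0 => 1
  | 1 => Polynomial.C 2 * Polynomial.X
  | n + 2 => Polynomial.C 2 * Polynomial.X * H (n + 1) - Polynomial.C (2 * (n + 1) : ℝ) * H n

/-- The eigenfunction `Φ^θ_n(x,y) = (cos θ · H_n(x) + sin θ · H_n(y)) e^{-(x²+y²)/2}`. -/
noncomputable def Phi (n : ℕ) (θ : ℝ) : ℝ × ℝ → ℝ := fun p =>
  (Real.cos θ * (H n).eval p.1 + Real.sin θ * (H n).eval p.2) *
    Real.exp (-(p.1 ^ 2 + p.2 ^ 2) / 2)

/-- The nodal set of `Φ^θ_n`. -/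
noncomputable def nodalSet (n : ℕ) (θ : ℝ) : Set (ℝ × ℝ) := {p | Phi n θ p = 0}

/-- The number of nodal domains: the number of connected components of the
complement of the nodal set. -/
noncomputable def numNodalDomains (n : ℕ) (θ : ℝ) : ℕ :=
  {C : Set (ℝ × ℝ) | ∃ p, Phi n θ p ≠ 0 ∧
    C = connectedComponentIn {q : ℝ × ℝ | Phi n θ q ≠ 0} p}.ncard

/-!
On the nodal set, `H_n(y) = -cot θ · H_n(x)`. A polynomial `P` of degree `m > 0` satisfies
`P(u) ∼ a u ^ m` as `|u| → ∞`, so `P(y(x)) = c P(x)` forces `(y(x) / x) ^ m → c`, whence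
`|y(x) / x| → |c| ^ (1 / m)`. As `x → -∞`, a lower bound on `y` makes `y(x) / x` asymptotically
nonpositive, which fixes the sign of the limit.
-/

open Bornology Filter Polynomial Topology

section PolynomialGrowth

variable {α 𝕜 : Type*} [NormedField 𝕜] {l : Filter α} {u v : α → 𝕜} {P : 𝕜[X]} {c : 𝕜}

-- `P(x) / x ^ natDegree P` is the reversed polynomial at `x⁻¹`, whose value at `0` is the leading
-- coefficient of `P`.
lemma tendsto_eval_div_pow_natDegree_cobounded (P : 𝕜[X]) :
    Tendsto (fun x => P.eval x / x ^ P.natDegree) (cobounded 𝕜) (𝓝 P.leadingCoeff) := by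
  have hrev : Tendsto (fun x => P.reverse.eval x⁻¹) (cobounded 𝕜) (𝓝 P.leadingCoeff) := by
    rw [← coeff_zero_reverse, coeff_zero_eq_eval_zero]
    exact (P.reverse.continuous.tendsto 0).comp tendsto_inv₀_cobounded
  refine hrev.congr' ?_
  filter_upwards [eventually_ne_cobounded 0] with x hx
  have := invertibleOfNonzero hx
  rw [eq_div_iff (pow_ne_zero _ hx), ← invOf_eq_inv]
  exact eval₂_reverse_mul_pow (RingHom.id 𝕜) x P

lemma tendsto_div_pow_of_eval_eq_mul_eval_of_cobounded (hP : P ≠ 0)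
    (hu : Tendsto u l (cobounded 𝕜)) (hv : Tendsto v l (cobounded 𝕜))
    (h : ∀ᶠ a in l, P.eval (v a) = c * P.eval (u a)) :
    Tendsto (fun a => (v a / u a) ^ P.natDegree) l (𝓝 c) := by
  have hlead : P.leadingCoeff ≠ 0 := leadingCoeff_ne_zero.mpr hP
  have hPu := (tendsto_eval_div_pow_natDegree_cobounded P).comp hu
  have hPv := (tendsto_eval_div_pow_natDegree_cobounded P).comp hv
  have hratio := (hPu.const_mul c).div hPv hlead
  rw [mul_div_cancel_right₀ c hlead] at hratio
  refine hratio.congr' ?_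
  filter_upwards [h, hPv.eventually_ne hlead] with a ha hva
  have hPa : P.eval (v a) ≠ 0 := (div_ne_zero_iff.mp hva).1
  simp only [Pi.div_apply, Function.comp_apply]
  rw [← mul_div_assoc, ← ha, div_div_div_cancel_left' _ _ hPa, div_pow]

lemma comap_eval_cobounded_le (P : 𝕜[X]) :
    comap (fun x => P.eval x) (cobounded 𝕜) ≤ cobounded 𝕜 := by
  refine comap_cobounded_le_iff.mpr fun s hs => ?_
  obtain ⟨C, hC⟩ := hs.exists_norm_le
  refine isBounded_iff_forall_norm_le.mpr
    ⟨∑ i ∈ Finset.range (P.natDegree + 1), ‖P.coeff i‖ * C ^ i, ?_⟩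
  rintro _ ⟨x, hx, rfl⟩
  simp only [eval_eq_sum_range]
  refine norm_sum_le_of_le _ fun i _ => ?_
  rw [norm_mul, norm_pow]
  gcongr
  exact hC x hx

lemma tendsto_div_zero_of_eval_eq_zero (hP : P ≠ 0) (hu : Tendsto u l (cobounded 𝕜))
    (h : ∀ᶠ a in l, P.eval (v a) = 0) : Tendsto (fun a => v a / u a) l (𝓝 0) := by
  obtain ⟨C, hC⟩ := (finite_setOfPred_isRoot hP).isBounded.exists_norm_le
  have hv : IsBoundedUnder (· ≤ ·) l (norm ∘ v) :=
    isBoundedUnder_of_eventually_le (h.mono fun a => hC (v a))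
  simpa only [div_eq_mul_inv, Function.comp_apply] using
    isBoundedUnder_le_mul_tendsto_zero hv (tendsto_inv₀_cobounded.comp hu)

lemma tendsto_div_pow_of_eval_eq_mul_eval (hP : P.natDegree ≠ 0)
    (hu : Tendsto u l (cobounded 𝕜)) (h : ∀ᶠ a in l, P.eval (v a) = c * P.eval (u a)) :
    Tendsto (fun a => (v a / u a) ^ P.natDegree) l (𝓝 c) := by
  have hP0 : P ≠ 0 := ne_zero_of_natDegree_gt (Nat.pos_of_ne_zero hP)
  rcases eq_or_ne c 0 with rfl | hc
  · simpa [hP] using (tendsto_div_zero_of_eval_eq_zero hP0 hu (by simpa using h)).pow P.natDegree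
  · have hPu : Tendsto (fun a => ‖P.eval (u a)‖) l atTop :=
      P.tendsto_norm_atTop (natDegree_pos_iff_degree_pos.mp (Nat.pos_of_ne_zero hP))
        (tendsto_norm_atTop_iff_cobounded.mpr hu)
    have hPv : Tendsto (fun a => P.eval (v a)) l (cobounded 𝕜) := by
      rw [← tendsto_norm_atTop_iff_cobounded]
      refine (hPu.const_mul_atTop (norm_pos_iff.mpr hc)).congr' ?_
      filter_upwards [h] with a ha
      rw [ha, norm_mul]
    have hv : Tendsto v l (cobounded 𝕜) :=
      (tendsto_comap_iff.mpr hPv).mono_right (comap_eval_cobounded_le P)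
    exact tendsto_div_pow_of_eval_eq_mul_eval_of_cobounded hP0 hu hv h

end PolynomialGrowth

section RealLimits

variable {α : Type*} {l : Filter α} {u v : α → ℝ} {P : ℝ[X]} {c r : ℝ}

-- For `u < 0`, `v = |v| - 2v⁻` gives `v / u = -|v / u| - 2v⁻ / u`, and `v⁻` is bounded.
lemma tendsto_div_neg_of_tendsto_abs_div (hu : Tendsto u l atBot)
    (hv : IsBoundedUnder (· ≥ ·) l v) (h : Tendsto (fun a => |v a / u a|) l (𝓝 r)) :
    Tendsto (fun a => v a / u a) l (𝓝 (-r)) := by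
  obtain ⟨b, hb⟩ := hv.eventually_ge
  have hneg : IsBoundedUnder (· ≤ ·) l (norm ∘ fun a => (v a)⁻) := by
    refine isBoundedUnder_of_eventually_le (a := b⁻) (hb.mono fun a ha => ?_)
    simpa [abs_of_nonneg (negPart_nonneg _)] using negPart_anti ha
  have hzero : Tendsto (fun a => (v a)⁻ * (u a)⁻¹) l (𝓝 0) :=
    isBoundedUnder_le_mul_tendsto_zero hneg (tendsto_inv_atBot_zero.comp hu)
  have hsum := h.neg.sub (hzero.const_mul 2)
  rw [mul_zero, sub_zero] at hsum
  refine hsum.congr' ?_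
  filter_upwards [hu.eventually_lt_atBot 0] with a ha
  calc -|v a / u a| - 2 * ((v a)⁻ * (u a)⁻¹)
      = (|v a| - 2 * (v a)⁻) / u a := by rw [abs_div, abs_of_neg ha]; ring
    _ = v a / u a := by
      congr 1
      linarith [posPart_add_negPart (v a), posPart_sub_negPart (v a)]

lemma tendsto_div_of_eval_eq_mul_eval (hP : P.natDegree ≠ 0) (hu : Tendsto u l atBot)
    (hv : IsBoundedUnder (· ≥ ·) l v) (h : ∀ᶠ a in l, P.eval (v a) = c * P.eval (u a)) :
    Tendsto (fun a => v a / u a) l (𝓝 (-|c| ^ (1 / (P.natDegree : ℝ)))) := by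
  have hpow : Tendsto (fun a => (v a / u a) ^ P.natDegree) l (𝓝 c) :=
    tendsto_div_pow_of_eval_eq_mul_eval hP (hu.mono_right IsOrderBornology.atBot_le_cobounded) h
  have hroot := hpow.abs.rpow_const (p := 1 / (P.natDegree : ℝ)) (Or.inr (by positivity))
  refine tendsto_div_neg_of_tendsto_abs_div hu hv (hroot.congr fun a => ?_)
  rw [abs_pow, one_div, Real.pow_rpow_inv_natCast (abs_nonneg _) hP]

end RealLimits

lemma degree_H : ∀ n : ℕ, (H n).degree = n
  | 0 => by simp [H]
  | 1 => by simp [H]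
  | n + 2 => by
    have hlead : (C 2 * X * H (n + 1)).degree = ↑(n + 2) := by
      rw [degree_mul, degree_C_mul_X two_ne_zero, degree_H (n + 1)]
      norm_cast
      ring
    have hlower : (C (2 * (n + 1) : ℝ) * H n).degree < (C 2 * X * H (n + 1)).degree := by
      rw [hlead, degree_C_mul (by positivity), degree_H n]
      exact_mod_cast Nat.lt_add_of_pos_right (n := n) two_pos
    rw [H, degree_sub_eq_left_of_degree_lt hlower, hlead]

lemma natDegree_H (n : ℕ) : (H n).natDegree = n :=
  natDegree_eq_of_degree_eq_some (degree_H n)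

lemma mem_nodalSet_iff {n : ℕ} {θ : ℝ} {p : ℝ × ℝ} :
    p ∈ nodalSet n θ ↔ Real.cos θ * (H n).eval p.1 + Real.sin θ * (H n).eval p.2 = 0 := by
  simp [nodalSet, Phi, Real.exp_ne_zero]

lemma eval_H_eq_of_mem_nodalSet {n : ℕ} {θ x y : ℝ} (hθ : Real.sin θ ≠ 0)
    (h : (x, y) ∈ nodalSet n θ) :
    (H n).eval y = -(Real.cos θ / Real.sin θ) * (H n).eval x := by
  rw [mem_nodalSet_iff] at h
  field_simp
  linear_combination h

theorem nodal_arc_asymptote_general {n : ℕ} (hn : n ≠ 0) {θ : ℝ} (hθ : Real.sin θ ≠ 0)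
    {y : ℝ → ℝ} (hbdd : IsBoundedUnder (· ≥ ·) atBot y)
    (hy : ∀ᶠ x in atBot, (x, y x) ∈ nodalSet n θ) :
    Tendsto (fun x => y x / x) atBot
      (𝓝 (-|Real.cos θ / Real.sin θ| ^ ((1 : ℝ) / (n : ℝ)))) := by
  have h := tendsto_div_of_eval_eq_mul_eval ((natDegree_H n).trans_ne hn) tendsto_id hbdd
    (hy.mono fun _ => eval_H_eq_of_mem_nodalSet hθ)
  rwa [abs_neg, natDegree_H] at h

open Real Set Filter in
/-- **Proposition 3.4 (asymptotics of the nodal arc).** Let `n` be odd, `θ ∈ (0,π/4]`,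
and let `t 0 < ⋯ < t (n-1)` enumerate the zeros of `H_n`. For `x ≤ t_{n,1}` let `y x`
be the unique zero of `y ↦ Φ^θ_n(x,y)` in `[t_{n,n}, ∞)`. Then
`y(x)/x → -(cot θ)^{1/n}` as `x → -∞`. -/
theorem nodal_arc_asymptote (n : ℕ) (hodd : Odd n) (hpos : 0 < n)
    (θ : ℝ) (hθ : θ ∈ Set.Ioc 0 (π / 4))
    (t : Fin n → ℝ) (htmono : StrictMono t)
    (htzero : ∀ x : ℝ, (H n).eval x = 0 ↔ ∃ i, x = t i)
    (y : ℝ → ℝ)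
    (hy : ∀ x : ℝ, x ≤ t ⟨0, hpos⟩ →
      y x ∈ Set.Ici (t ⟨n - 1, by omega⟩) ∧ Phi n θ (x, y x) = 0) :
    Tendsto (fun x => y x / x) atBot
      (nhds (-(Real.cos θ / Real.sin θ) ^ ((1 : ℝ) / (n : ℝ)))) := by
  have hsin : 0 < Real.sin θ := Real.sin_pos_of_pos_of_lt_pi hθ.1 (by linarith [hθ.2, Real.pi_pos])
  have hcos : 0 < Real.cos θ :=
    Real.cos_pos_of_mem_Ioo ⟨by linarith [hθ.1, Real.pi_pos], by linarith [hθ.2, Real.pi_pos]⟩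
  have hx := eventually_le_atBot (t ⟨0, hpos⟩)
  rw [← abs_of_pos (div_pos hcos hsin)]
  exact nodal_arc_asymptote_general hpos.ne' hsin.ne'
    (isBoundedUnder_of_eventually_ge (hx.mono fun x h => (hy x h).1))
    (hx.mono fun x h => (hy x h).2)
end

section
/- Let n be an odd positive integer and let x, y ∈ ℝ satisfy H_n'(x) = 0, H_n'(y) = 0 and H_n(x) = H_n(y). Then x = y. In other words, all critical zeros of the function Ψ_n(x,y) = H_n(x) − H_n(y) lie on the diagonal {x = y}. -/
/-!
By Hermite's equation `H_n'' = 2t H_n' - 2n H_n`, the Sonin function `2n H_n² + H_n'²` has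
derivative `4t H_n'²`, so it is strictly increasing on `[0, ∞)`; it is even, and at a critical
point of `H_n` it equals `2n H_n²`. Hence critical points with the same `H_n²` have the same
absolute value. If `x = -y` and `n` is odd, then equal values of `H_n` at `x` and `y` must vanish,
which is impossible because the zeros of `H_n` are simple.
-/

open Polynomial Set

section Monotone

theorem strictMonoOn_eval_of_monotoneOn {K : Type*} [Field K] [LinearOrder K]
    [IsStrictOrderedRing K] {p : K[X]} {s : Set K} (hs : s.OrdConnected)
    (hp : derivative p ≠ 0) (hmono : MonotoneOn (fun t ↦ p.eval t) s) :
    StrictMonoOn (fun t ↦ p.eval t) s := by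
  intro a ha b hb hab
  refine (hmono ha hb hab.le).lt_of_ne fun heq ↦ hp ?_
  have hconst : ∀ t ∈ Icc a b, p.eval t = (C (p.eval a)).eval t := fun t ht ↦ by
    have hts : t ∈ s := hs.out ha hb ht
    rw [eval_C]
    exact ((hmono hts hb ht.2).trans_eq heq.symm).antisymm (hmono ha hts ht.1)
  rw [eq_of_infinite_eval_eq p (C (p.eval a)) ((Icc_infinite hab).mono hconst), derivative_C]

theorem strictMonoOn_eval_of_derivative_nonneg {p : ℝ[X]} {s : Set ℝ} (hs : Convex ℝ s)
    (hp : derivative p ≠ 0) (hnonneg : ∀ t ∈ interior s, 0 ≤ (derivative p).eval t) :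
    StrictMonoOn (fun t ↦ p.eval t) s :=
  strictMonoOn_eval_of_monotoneOn hs.ordConnected hp <|
    monotoneOn_of_deriv_nonneg hs p.continuousOn p.differentiableOn fun t ht ↦ by
      simpa only [Polynomial.deriv] using hnonneg t ht

end Monotone

section Sonin

variable {R : Type*} [CommRing R]

/-- The Sonin function `c p² + p'²` of a polynomial `p`, a quantity that is monotone where `q ≥ 0`
for solutions of `p'' = q p' - c p`. -/
noncomputable def sonin (c : R) (p : R[X]) : R[X] :=
  C c * p ^ 2 + derivative p ^ 2

theorem derivative_sonin {c : R} {p q : R[X]}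
    (hode : derivative (derivative p) = q * derivative p - C c * p) :
    derivative (sonin c p) = 2 * q * derivative p ^ 2 := by
  simp only [sonin, derivative_add, derivative_C_mul, derivative_sq, hode, map_ofNat]
  ring

theorem sonin_comp_neg_X {c : R} {p : R[X]} {k : ℕ} (hp : p.comp (-X) = (-1) ^ k * p) :
    (sonin c p).comp (-X) = sonin c p := by
  have hsign : ((-1 : R[X]) ^ k) ^ 2 = 1 := by rw [pow_right_comm, neg_one_sq, one_pow]
  have hconst : derivative ((-1 : R[X]) ^ k) = 0 := by simp [derivative_pow]
  have hderiv : (derivative p).comp (-X) = -((-1) ^ k * derivative p) := by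
    have h := congrArg derivative hp
    rw [derivative_comp, derivative_mul, hconst, derivative_neg, derivative_X] at h
    linear_combination -h
  simp only [sonin, add_comp, mul_comp, pow_comp, C_comp, hp, hderiv, neg_sq, mul_pow, hsign,
    one_mul]

theorem eval_sonin_of_derivative_eval_eq_zero {c t : R} {p : R[X]}
    (ht : (derivative p).eval t = 0) : (sonin c p).eval t = c * p.eval t ^ 2 := by
  simp [sonin, ht]

theorem strictMonoOn_eval_sonin {c : ℝ} {p q : ℝ[X]} {s : Set ℝ} (hs : Convex ℝ s)
    (hode : derivative (derivative p) = q * derivative p - C c * p)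
    (hp : derivative p ≠ 0) (hq : q ≠ 0) (hnonneg : ∀ t ∈ interior s, 0 ≤ q.eval t) :
    StrictMonoOn (fun t ↦ (sonin c p).eval t) s := by
  refine strictMonoOn_eval_of_derivative_nonneg hs ?_ fun t ht ↦ ?_
  · rw [derivative_sonin hode]
    exact mul_ne_zero (mul_ne_zero two_ne_zero hq) (pow_ne_zero 2 hp)
  · have := hnonneg t ht
    simp only [derivative_sonin hode, eval_mul, eval_pow, eval_ofNat]
    positivity

end Sonin

section Hermite

theorem H_zero : H 0 = 1 := by
  rw [H]

theorem H_one : H 1 = 2 * X := by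
  rw [H, map_ofNat]

theorem H_add_two (n : ℕ) :
    H (n + 2) = 2 * X * H (n + 1) - 2 * ((n : ℝ[X]) + 1) * H n := by
  simp only [H, map_mul, map_add, map_ofNat, map_natCast, map_one]

theorem derivative_H_add_one (n : ℕ) : derivative (H (n + 1)) = 2 * ((n : ℝ[X]) + 1) * H n := by
  induction n using Nat.twoStepInduction with
  | zero => simp [H_zero, H_one]
  | one =>
    simp only [H_add_two, zero_add, H_one, H_zero, derivative_sub, derivative_mul, derivative_add,
      derivative_X, derivative_one, derivative_ofNat, derivative_natCast]
    push_cast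
    ring
  | more n ih₀ ih₁ =>
    rw [H_add_two (n + 1)]
    simp only [derivative_sub, derivative_mul, derivative_add, derivative_X, derivative_one,
      derivative_ofNat, derivative_natCast, ih₀, ih₁]
    push_cast
    linear_combination (-2 * (n + 2) : ℝ[X]) * H_add_two n

theorem H_add_one (n : ℕ) : H (n + 1) = 2 * X * H n - derivative (H n) := by
  cases n with
  | zero => simp [H_zero, H_one]
  | succ n => rw [H_add_two, derivative_H_add_one]

theorem derivative_derivative_H (n : ℕ) :
    derivative (derivative (H n)) = 2 * X * derivative (H n) - C (2 * n : ℝ) * H n := by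
  have h := congrArg derivative (H_add_one n)
  simp only [derivative_H_add_one, derivative_sub, derivative_mul, derivative_X,
    derivative_ofNat] at h
  simp only [map_mul, map_ofNat, map_natCast]
  linear_combination h

theorem separable_H (n : ℕ) : (H n).Separable := by
  induction n with
  | zero => simpa only [H_zero] using separable_one
  | succ n ih =>
    have hunit : IsUnit (2 * ((n : ℝ[X]) + 1)) := by
      have h : IsUnit (C (2 * (n + 1) : ℝ)) := isUnit_C.2 (IsUnit.mk0 _ (by positivity))
      simpa only [map_mul, map_add, map_ofNat, map_natCast, map_one] using h
    have hcop : IsCoprime (H (n + 1)) (H n) := by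
      rw [H_add_one, sub_eq_add_neg, IsCoprime.mul_add_right_left_iff, IsCoprime.neg_left_iff]
      exact (separable_def _).1 ih |>.symm
    rwa [separable_def, derivative_H_add_one, isCoprime_mul_unit_left_right hunit]

theorem derivative_H_ne_zero {n : ℕ} (hn : n ≠ 0) : derivative (H n) ≠ 0 := by
  obtain ⟨m, rfl⟩ := Nat.exists_eq_succ_of_ne_zero hn
  rw [derivative_H_add_one]
  exact mul_ne_zero (mul_ne_zero two_ne_zero m.cast_add_one_ne_zero) (separable_H m).ne_zero

theorem H_comp_neg_X (n : ℕ) : (H n).comp (-X) = (-1) ^ n * H n := by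
  induction n using Nat.twoStepInduction with
  | zero => simp [H_zero]
  | one => simp [H_one]
  | more n ih₀ ih₁ =>
    simp only [H_add_two, sub_comp, mul_comp, add_comp, X_comp, one_comp, ofNat_comp,
      natCast_comp, ih₀, ih₁]
    ring

theorem eval_neg_H (n : ℕ) (t : ℝ) : (H n).eval (-t) = (-1) ^ n * (H n).eval t := by
  simpa using congrArg (eval t) (H_comp_neg_X n)

theorem eval_abs_sonin_H (c : ℝ) (n : ℕ) (t : ℝ) :
    (sonin c (H n)).eval |t| = (sonin c (H n)).eval t := by
  rcases abs_choice t with h | h <;> rw [h]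
  simpa using congrArg (eval t) (sonin_comp_neg_X (c := c) (H_comp_neg_X n))

theorem strictMonoOn_eval_sonin_H {n : ℕ} (hn : n ≠ 0) :
    StrictMonoOn (fun t ↦ (sonin (2 * n : ℝ) (H n)).eval t) (Ici 0) := by
  refine strictMonoOn_eval_sonin (convex_Ici 0) (derivative_derivative_H n)
    (derivative_H_ne_zero hn) (mul_ne_zero two_ne_zero X_ne_zero) fun t ht ↦ ?_
  have ht : 0 ≤ t := interior_subset ht
  simpa using ht

theorem abs_eq_abs_of_derivative_eval_H_eq_zero {n : ℕ} (hn : n ≠ 0) {x y : ℝ}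
    (hx : (derivative (H n)).eval x = 0) (hy : (derivative (H n)).eval y = 0)
    (hxy : (H n).eval x ^ 2 = (H n).eval y ^ 2) : |x| = |y| := by
  refine (strictMonoOn_eval_sonin_H hn).injOn (abs_nonneg x) (abs_nonneg y) ?_
  simp only [eval_abs_sonin_H]
  rw [eval_sonin_of_derivative_eval_eq_zero hx, eval_sonin_of_derivative_eval_eq_zero hy, hxy]

end Hermite

/-- **Proposition 4.1 (critical zeros on the diagonal).** Let `n` be odd. If
`H_n'(x) = 0`, `H_n'(y) = 0` and `H_n(x) = H_n(y)`, then `x = y`; i.e. all critical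
zeros of `Ψ_n(x,y) = H_n(x) - H_n(y)` lie on the diagonal. -/
theorem critical_zeros_of_Psi_on_diagonal (n : ℕ) (hodd : Odd n) (hpos : 0 < n)
    (x y : ℝ)
    (hx : (Polynomial.derivative (H n)).eval x = 0)
    (hy : (Polynomial.derivative (H n)).eval y = 0)
    (hxy : (H n).eval x = (H n).eval y) :
    x = y := by
  have habs : |x| = |y| :=
    abs_eq_abs_of_derivative_eval_H_eq_zero hpos.ne' hx hy (congrArg (· ^ 2) hxy)
  refine (abs_eq_abs.1 habs).resolve_right fun hneg ↦ ?_
  have hanti : (H n).eval x = -(H n).eval y := by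
    rw [hneg, eval_neg_H, hodd.neg_one_pow, neg_one_mul]
  have hzero : (H n).eval y = 0 := self_eq_neg.1 (hxy.symm.trans hanti)
  exact (separable_H n).eval₂_derivative_ne_zero (RingHom.id ℝ) hzero hy
end

section
/- Let ℓ ∈ ℕ and let u be a nonzero element of the eigenspace E_ℓ, i.e. a nonzero real linear combination of the functions φ_{ℓ−j,j}, 0 ≤ j ≤ ℓ. Then the number μ(u) of connected components of {(x,y) ∈ ℝ² : u(x,y) ≠ 0} satisfies Courant's bound μ(u) ≤ ℓ(ℓ+1)/2 + 1. -/
/-- The basis eigenfunctions `φ_{m,n}(x,y) = H_m(x) H_n(y) e^{-(x²+y²)/2}` of the 2D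
isotropic quantum harmonic oscillator. -/
noncomputable def phi (m n : ℕ) : ℝ × ℝ → ℝ := fun p =>
  (H m).eval p.1 * (H n).eval p.2 * Real.exp (-(p.1 ^ 2 + p.2 ^ 2) / 2)

/-- The eigenspace `E_ℓ` associated with the eigenvalue `2(ℓ+1)`: the real span of
`φ_{ℓ-j,j}`, `0 ≤ j ≤ ℓ`. -/
noncomputable def eigenspace (ℓ : ℕ) : Submodule ℝ (ℝ × ℝ → ℝ) :=
  Submodule.span ℝ {f : ℝ × ℝ → ℝ | ∃ j : ℕ, j ≤ ℓ ∧ f = phi (ℓ - j) j}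

/-- The number `μ(u)` of nodal domains of `u`: the number of connected components of
`{p : u p ≠ 0}`. -/
noncomputable def mu (u : ℝ × ℝ → ℝ) : ℕ :=
  {C : Set (ℝ × ℝ) | ∃ p : ℝ × ℝ, u p ≠ 0 ∧
    C = connectedComponentIn {q : ℝ × ℝ | u q ≠ 0} p}.ncard

/-!
Suppose that `u` had more nodal domains than one plus the number `ℓ(ℓ+1)/2` of modes `φ_{m,n}` with
`m + n < ℓ`. Leaving out one nodal domain, some nonzero combination of the restrictions of `u` to
the others is orthogonal to all these lower modes. It has the form `v = g u` with `g` bounded and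
locally constant off the zero set of `u`. As `v` has no jump across that set, integrations by parts
against `v` leave no boundary terms there, and the energy of `v` is exactly `2ℓ‖v‖²` (up to the
ground-state shift). By Parseval, `v`, having no component of lower energy, has none of higher
energy either, so `v ∈ E_ℓ`. But then `v` is analytic and vanishes on the omitted domain: `v = 0`,
a contradiction.
-/

open MeasureTheory Filter Set Topology

section NodalDomains

variable {X : Type*} [TopologicalSpace X] {u : X → ℝ} {C D : Set X} {p : X}

/-- The nodal domains of `u`: the connected components of `{u ≠ 0}`. -/
def nodalDomains (u : X → ℝ) : Set (Set X) :=
  {C | ∃ p, u p ≠ 0 ∧ C = connectedComponentIn {q | u q ≠ 0} p}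

lemma isOpen_of_mem_nodalDomains [LocallyConnectedSpace X] (hu : Continuous u)
    (hC : C ∈ nodalDomains u) : IsOpen C := by
  obtain ⟨p, -, rfl⟩ := hC
  exact (isOpen_ne_fun hu continuous_const).connectedComponentIn

lemma nonempty_of_mem_nodalDomains (hC : C ∈ nodalDomains u) : C.Nonempty := by
  obtain ⟨p, hp, rfl⟩ := hC
  exact ⟨p, mem_connectedComponentIn hp⟩

lemma ne_zero_of_mem_nodalDomains (hC : C ∈ nodalDomains u) (hp : p ∈ C) : u p ≠ 0 := by
  obtain ⟨q, -, rfl⟩ := hC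
  exact connectedComponentIn_subset _ _ hp

lemma eq_of_mem_nodalDomains (hC : C ∈ nodalDomains u) (hD : D ∈ nodalDomains u)
    (hpC : p ∈ C) (hpD : p ∈ D) : C = D := by
  obtain ⟨q, -, rfl⟩ := hC
  obtain ⟨r, -, rfl⟩ := hD
  exact (connectedComponentIn_eq hpC).trans (connectedComponentIn_eq hpD).symm

lemma exists_mem_nodalDomains (hp : u p ≠ 0) : ∃ C ∈ nodalDomains u, p ∈ C :=
  ⟨_, ⟨p, hp, rfl⟩, mem_connectedComponentIn hp⟩

lemma sum_smul_indicator_nodalDomains_apply {s : Finset (Set X)} [Decidable (C ∈ s)]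
    (hs : ↑s ⊆ nodalDomains u) (a : Set X → ℝ) (hC : C ∈ nodalDomains u) (hp : p ∈ C) :
    (∑ D ∈ s, a D • D.indicator 1) p = if C ∈ s then a C else 0 := by
  have hsingle (D : Set X) (hD : D ∈ s) (hne : D ≠ C) : a D * D.indicator 1 p = 0 := by
    rw [indicator_of_notMem fun hpD => hne (eq_of_mem_nodalDomains (hs hD) hC hpD hp), mul_zero]
  simp only [Finset.sum_apply, Pi.smul_apply, smul_eq_mul]
  split_ifs with hCs
  · rw [Finset.sum_eq_single_of_mem C hCs hsingle, indicator_of_mem hp, Pi.one_apply, mul_one]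
  · exact Finset.sum_eq_zero fun D hD => hsingle D hD (ne_of_mem_of_not_mem hD hCs)

end NodalDomains

section NodalMultipliers

variable {X : Type*} [TopologicalSpace X] [MeasurableSpace X] {u v g : X → ℝ}

/-- The bounded measurable functions that are locally constant off the zero set of `u`, such as
the indicators of the nodal domains of `u`. Multiplying `u` by such a function creates no jump,
so these functions can be carried through integrations by parts. -/
def nodalMultipliers (u : X → ℝ) : Subalgebra ℝ (X → ℝ) where
  carrier := {g | Measurable g ∧ (∃ c, ∀ p, |g p| ≤ c) ∧ ∀ p, u p ≠ 0 → ∀ᶠ q in 𝓝 p, g q = g p}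
  mul_mem' := by
    rintro f g ⟨hf, ⟨c, hc⟩, hfu⟩ ⟨hg, ⟨d, hd⟩, hgu⟩
    refine ⟨hf.mul hg, ⟨c * d, fun p => ?_⟩, fun p hp => ?_⟩
    · rw [Pi.mul_apply, abs_mul]
      exact mul_le_mul (hc p) (hd p) (abs_nonneg _) ((abs_nonneg _).trans (hc p))
    · filter_upwards [hfu p hp, hgu p hp] with q hfq hgq
      rw [Pi.mul_apply, Pi.mul_apply, hfq, hgq]
  add_mem' := by
    rintro f g ⟨hf, ⟨c, hc⟩, hfu⟩ ⟨hg, ⟨d, hd⟩, hgu⟩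
    refine ⟨hf.add hg, ⟨c + d, fun p => (abs_add_le _ _).trans (add_le_add (hc p) (hd p))⟩,
      fun p hp => ?_⟩
    filter_upwards [hfu p hp, hgu p hp] with q hfq hgq
    rw [Pi.add_apply, Pi.add_apply, hfq, hgq]
  algebraMap_mem' r :=
    ⟨measurable_const, ⟨|r|, fun _ => le_rfl⟩, fun _ _ => .of_forall fun _ => rfl⟩

lemma nodalMultipliers_mono (h : ∀ p, u p = 0 → v p = 0) :
    nodalMultipliers u ≤ nodalMultipliers v :=
  fun _ ⟨hg, hbdd, hloc⟩ => ⟨hg, hbdd, fun p hp => hloc p (mt (h p) hp)⟩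

lemma comp_mem_nodalMultipliers {Y : Type*} [TopologicalSpace Y] [MeasurableSpace Y] {f : Y → X}
    (hg : g ∈ nodalMultipliers u) (hfm : Measurable f) (hf : Continuous f) :
    g ∘ f ∈ nodalMultipliers (u ∘ f) := by
  obtain ⟨hg, ⟨c, hc⟩, hloc⟩ := hg
  exact ⟨hg.comp hfm, ⟨c, fun p => hc (f p)⟩, fun p hp => hf.continuousAt.eventually (hloc _ hp)⟩

lemma indicator_one_mem_nodalMultipliers [LocallyConnectedSpace X] [OpensMeasurableSpace X]
    (hu : Continuous u) {C : Set X} (hC : C ∈ nodalDomains u) :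
    C.indicator 1 ∈ nodalMultipliers u := by
  classical
  refine ⟨measurable_one.indicator (isOpen_of_mem_nodalDomains hu hC).measurableSet,
    ⟨1, fun p => ?_⟩, fun p hp => ?_⟩
  · by_cases hpC : p ∈ C <;> simp [hpC]
  · obtain ⟨D, hD, hpD⟩ := exists_mem_nodalDomains hp
    filter_upwards [(isOpen_of_mem_nodalDomains hu hD).mem_nhds hpD] with q hqD
    have : q ∈ C ↔ p ∈ C :=
      ⟨fun hq => eq_of_mem_nodalDomains hD hC hqD hq ▸ hpD,
        fun hp => eq_of_mem_nodalDomains hD hC hpD hp ▸ hqD⟩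
    simp only [indicator_apply, this, Pi.one_apply]

lemma memLp_mul_of_mem_nodalMultipliers {f : X → ℝ} {μ : Measure X} {r : ENNReal}
    (hg : g ∈ nodalMultipliers u) (hf : MemLp f r μ) : MemLp (g * f) r μ := by
  obtain ⟨hgm, ⟨c, hc⟩, -⟩ := hg
  refine hf.of_le_mul (c := c) (hgm.aestronglyMeasurable.mul hf.1) (.of_forall fun p => ?_)
  rw [Pi.mul_apply, norm_mul]
  exact mul_le_mul_of_nonneg_right (hc p) (norm_nonneg _)

lemma integrable_mul_of_mem_nodalMultipliers {f : X → ℝ} {μ : Measure X}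
    (hg : g ∈ nodalMultipliers u) (hf : Integrable f μ) : Integrable (fun p => g p * f p) μ :=
  memLp_one_iff_integrable.1
    (memLp_mul_of_mem_nodalMultipliers hg (memLp_one_iff_integrable.2 hf))

lemma tendsto_zero_mul_of_mem_nodalMultipliers {f : X → ℝ} {l : Filter X}
    (hg : g ∈ nodalMultipliers u) (hf : Tendsto f l (𝓝 0)) : Tendsto (g * f) l (𝓝 0) := by
  obtain ⟨-, ⟨c, hc⟩, -⟩ := hg
  have hbdd : IsBoundedUnder (· ≤ ·) l (norm ∘ g) := isBoundedUnder_of_eventually_le (.of_forall hc)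
  exact isBoundedUnder_le_mul_tendsto_zero hbdd hf

lemma continuous_mul_of_mem_nodalMultipliers (hg : g ∈ nodalMultipliers u) (hu : Continuous u) :
    Continuous (g * u) := by
  refine continuous_iff_continuousAt.2 fun p => ?_
  by_cases hp : u p = 0
  · have hlim : Tendsto u (𝓝 p) (𝓝 0) := hp ▸ hu.tendsto p
    simpa [ContinuousAt, hp] using tendsto_zero_mul_of_mem_nodalMultipliers hg hlim
  · have hloc : g * u =ᶠ[𝓝 p] fun q => g p * u q := by
      filter_upwards [hg.2.2 p hp] with q hq
      rw [Pi.mul_apply, hq]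
    exact (continuous_const.mul hu).continuousAt.congr hloc.symm

end NodalMultipliers

section IntegrationByParts

variable {F F' g : ℝ → ℝ}

lemma countable_setOf_eq_zero_and_deriv_ne_zero (hF : ∀ x, HasDerivAt F (F' x) x) :
    {x | F x = 0 ∧ F' x ≠ 0}.Countable := by
  refine countable_setOfPred_isolated_right_within.mono fun x hx => And.intro hx ?_
  have hne : ∀ᶠ y in 𝓝[≠] x, F y ≠ 0 := (hF x).eventually_ne hx.2
  rw [← eventually_false_iff_eq_bot]
  filter_upwards [self_mem_nhdsWithin, nhdsWithin_mono x (fun y hy => hy.2.ne') hne]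
    with y hy hFy using hFy hy.1.1

/-- At a simple zero of `F` the product `g * F` need not be differentiable, but there are only
countably many of these; at a multiple zero its derivative vanishes. -/
lemma hasDerivAt_mul_of_mem_nodalMultipliers {x F'x : ℝ} (hg : g ∈ nodalMultipliers F)
    (hF : HasDerivAt F F'x x) (hx : F x = 0 → F'x = 0) : HasDerivAt (g * F) (g x * F'x) x := by
  by_cases h0 : F x = 0
  · rw [hx h0] at hF ⊢
    obtain ⟨-, ⟨c, hc⟩, -⟩ := hg
    have hO : (g * F) =O[𝓝 x] F := .of_bound c (.of_forall fun y => by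
      rw [Pi.mul_apply, norm_mul]
      exact mul_le_mul_of_nonneg_right (hc y) (norm_nonneg _))
    rw [hasDerivAt_iff_isLittleO] at hF ⊢
    simp only [h0, Pi.mul_apply, smul_zero, mul_zero, sub_zero] at hF ⊢
    exact hO.trans_isLittleO hF
  · refine (hF.const_mul (g x)).congr_of_eventuallyEq ?_
    filter_upwards [hg.2.2 x h0] with y hy
    rw [Pi.mul_apply, hy]

lemma integral_mul_deriv_eq_zero (hF : ∀ x, HasDerivAt F (F' x) x) (hF' : Integrable F')
    (hlim : Tendsto F (cocompact ℝ) (𝓝 0)) (hg : g ∈ nodalMultipliers F) :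
    ∫ x, g x * F' x = 0 := by
  have hint : Integrable (g * F') := integrable_mul_of_mem_nodalMultipliers hg hF'
  have hcont : Continuous (g * F) := continuous_mul_of_mem_nodalMultipliers hg
    (continuous_iff_continuousAt.2 fun x => (hF x).continuousAt)
  have hFTC (R : ℝ) : ∫ x in (-R)..R, (g * F') x = (g * F) R - (g * F) (-R) := by
    refine integral_eq_of_hasDerivAt_off_countable _ _
      (countable_setOf_eq_zero_and_deriv_ne_zero hF) hcont.continuousOn (fun x hx => ?_)
      hint.intervalIntegrable
    exact hasDerivAt_mul_of_mem_nodalMultipliers hg (hF x) fun h0 => not_not.1 fun h => hx.2 ⟨h0, h⟩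
  have hleft := intervalIntegral_tendsto_integral hint tendsto_neg_atTop_atBot tendsto_id
  simp only [id_eq, hFTC] at hleft
  have hlim' := tendsto_zero_mul_of_mem_nodalMultipliers hg hlim
  have hright : Tendsto (fun R => (g * F) R - (g * F) (-R)) atTop (𝓝 (0 - 0)) :=
    (hlim'.mono_left atTop_le_cocompact).sub
      ((hlim'.mono_left atBot_le_cocompact).comp tendsto_neg_atTop_atBot)
  simpa using tendsto_nhds_unique hleft hright

lemma integral_mul_deriv_fst_eq_zero {F F' g : ℝ × ℝ → ℝ}
    (hF : ∀ p, HasDerivAt (fun x => F (x, p.2)) (F' p) p.1) (hF' : Integrable F')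
    (hlim : ∀ y, Tendsto (fun x => F (x, y)) (cocompact ℝ) (𝓝 0)) (hg : g ∈ nodalMultipliers F) :
    ∫ p, g p * F' p = 0 := by
  have hint : Integrable (g * F') := integrable_mul_of_mem_nodalMultipliers hg hF'
  rw [Measure.volume_eq_prod] at hF' hint ⊢
  refine (integral_prod_symm _ hint).trans (integral_eq_zero_of_ae ?_)
  filter_upwards [hF'.prod_left_ae] with y hy
  exact integral_mul_deriv_eq_zero (fun x => hF (x, y)) hy (hlim y)
    (comp_mem_nodalMultipliers hg (by fun_prop) (by fun_prop : Continuous fun x => (x, y)))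

end IntegrationByParts

section Moments

variable {E : Type*} [NormedAddCommGroup E] [NormedSpace ℝ E] [CompleteSpace E]
  [SecondCountableTopology E] [MeasurableSpace E] [BorelSpace E] {μ : Measure E} {f : E → ℝ}

lemma ae_eq_zero_of_forall_integral_mul_cexp_eq_zero (hf : Integrable f μ)
    (h : ∀ L : StrongDual ℝ E, ∫ x, (f x : ℂ) * Complex.exp (L x * Complex.I) ∂μ = 0) :
    f =ᵐ[μ] 0 := by
  have hpos : AEMeasurable (fun x => ENNReal.ofReal (f x)) μ := hf.1.aemeasurable.ennreal_ofReal
  have hneg : AEMeasurable (fun x => ENNReal.ofReal (-f x)) μ :=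
    hf.1.aemeasurable.neg.ennreal_ofReal
  have := isFiniteMeasure_withDensity_ofReal hf.2
  have : IsFiniteMeasure (μ.withDensity fun x => ENNReal.ofReal (-f x)) :=
    isFiniteMeasure_withDensity_ofReal hf.neg.2
  have hint (L : StrongDual ℝ E) {k : E → ℝ} (hk : Integrable k μ) :
      Integrable (fun x => (k x : ℂ) * Complex.exp (L x * Complex.I)) μ :=
    hk.ofReal.mul_bdd (c := 1) (Continuous.aestronglyMeasurable (by fun_prop))
      (.of_forall fun x => (Complex.norm_exp_ofReal_mul_I _).le)
  have hparts : μ.withDensity (fun x => ENNReal.ofReal (f x)) =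
      μ.withDensity (fun x => ENNReal.ofReal (-f x)) := by
    refine Measure.ext_of_charFunDual (funext fun L => ?_)
    rw [charFunDual_apply, charFunDual_apply,
      integral_withDensity_eq_integral_toReal_smul₀ hpos (by simp),
      integral_withDensity_eq_integral_toReal_smul₀ hneg (by simp), ← sub_eq_zero, ← h L]
    simp only [ENNReal.toReal_ofReal', Complex.real_smul]
    rw [← integral_sub (hint L hf.pos_part) (hint L hf.neg_part)]
    refine integral_congr_ae (.of_forall fun x => ?_)
    simp only [← sub_mul, ← Complex.ofReal_sub, max_zero_sub_max_neg_zero_eq_self]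
  rw [withDensity_eq_iff hpos hneg hf.lintegral_lt_top.ne] at hparts
  filter_upwards [hparts] with x hx
  have hx' := congrArg ENNReal.toReal hx
  rw [ENNReal.toReal_ofReal', ENNReal.toReal_ofReal'] at hx'
  have := max_zero_sub_max_neg_zero_eq_self (f x)
  simp only [Pi.zero_apply]
  linarith

/-- The exponential moments dominate the power series of the Fourier transform of `f`, which
therefore vanishes together with the moments. -/
lemma ae_eq_zero_of_forall_integral_mul_pow_eq_zero
    (hf : ∀ L : StrongDual ℝ E, Integrable (fun x => f x * Real.exp |L x|) μ)
    (h : ∀ (L : StrongDual ℝ E) (k : ℕ), ∫ x, f x * L x ^ k ∂μ = 0) : f =ᵐ[μ] 0 := by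
  have hfint : Integrable f μ := by simpa using hf 0
  refine ae_eq_zero_of_forall_integral_mul_cexp_eq_zero hfint fun L => ?_
  have hexp (x : ℝ) : HasSum (fun k : ℕ => x ^ k / k.factorial) (Real.exp x) := by
    simpa only [Real.exp_eq_exp_ℝ] using NormedSpace.expSeries_div_hasSum_exp x
  have hcexp (z : ℂ) : HasSum (fun k : ℕ => z ^ k / k.factorial) (Complex.exp z) := by
    simpa only [Complex.exp_eq_exp_ℂ] using NormedSpace.expSeries_div_hasSum_exp z
  have hseries : HasSum
      (fun k : ℕ => ∫ x, (f x : ℂ) * ((L x * Complex.I) ^ k / k.factorial) ∂μ)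
      (∫ x, (f x : ℂ) * Complex.exp (L x * Complex.I) ∂μ) := by
    refine hasSum_integral_of_dominated_convergence
      (fun (k : ℕ) x => |f x| * (|L x| ^ k / k.factorial)) (fun k => ?_) (fun k => ?_) ?_ ?_ ?_
    · exact hfint.ofReal.1.mul (Continuous.aestronglyMeasurable (by fun_prop))
    · exact .of_forall fun x => by simp
    · exact .of_forall fun x => ((hexp _).mul_left _).summable
    · simp only [((hexp _).mul_left _).tsum_eq]
      simpa using (hf L).norm
    · exact .of_forall fun x => (hcexp _).mul_left _
  have hterm (k : ℕ) : ∫ x, (f x : ℂ) * ((L x * Complex.I) ^ k / k.factorial) ∂μ = 0 := by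
    calc ∫ x, (f x : ℂ) * ((L x * Complex.I) ^ k / k.factorial) ∂μ
        = ∫ x, (Complex.I ^ k / k.factorial) * ((f x * L x ^ k : ℝ) : ℂ) ∂μ := by
          congr! 2 with x
          push_cast
          ring
      _ = 0 := by rw [integral_const_mul, integral_complex_ofReal, h L k]; simp
  simp only [hterm] at hseries
  exact hseries.unique hasSum_zero

end Moments

section Hermite

lemma H_succ (n : ℕ) : H (n + 1) =
    Polynomial.C 2 * Polynomial.X * H n - Polynomial.C (2 * (n : ℝ)) * H (n - 1) := by
  cases n <;> simp [H]

lemma derivative_H (n : ℕ) :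
    Polynomial.derivative (H n) = Polynomial.C (2 * (n : ℝ)) * H (n - 1) := by
  induction n using Nat.twoStepInduction with
  | zero => simp [H]
  | one => simp [H]
  | more n ih ih' =>
    rw [Nat.add_sub_cancel] at ih'
    rw [H, Polynomial.derivative_sub, Polynomial.derivative_mul, Polynomial.derivative_C_mul,
      Polynomial.derivative_C_mul, ih, ih', show n + 2 - 1 = n + 1 from rfl, H_succ n]
    simp only [Polynomial.derivative_X, Nat.cast_add, Nat.cast_ofNat, Nat.cast_one,
      Polynomial.C_mul, Polynomial.C_add, Polynomial.C_1, map_ofNat, map_natCast]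
    ring

lemma integrable_eval_mul_exp_neg_mul_sq (P : Polynomial ℝ) {b : ℝ} (hb : 0 < b) :
    Integrable fun x : ℝ => P.eval x * Real.exp (-b * x ^ 2) := by
  induction P using Polynomial.induction_on' with
  | add P Q hP hQ =>
    simp only [Polynomial.eval_add, add_mul]
    exact hP.add hQ
  | monomial n a =>
    simp only [Polynomial.eval_monomial, mul_assoc]
    have hn : (-1 : ℝ) < n := neg_one_lt_zero.trans_le n.cast_nonneg
    simpa using (integrable_rpow_mul_exp_neg_mul_sq hb hn).const_mul a

lemma tendsto_eval_mul_exp_neg_mul_sq_cocompact (P : Polynomial ℝ) {b : ℝ} (hb : 0 < b) :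
    Tendsto (fun x : ℝ => P.eval x * Real.exp (-b * x ^ 2)) (cocompact ℝ) (𝓝 0) := by
  induction P using Polynomial.induction_on' with
  | add P Q hP hQ =>
    simp only [Polynomial.eval_add, add_mul]
    simpa using hP.add hQ
  | monomial n a =>
    have hmonomial : Tendsto (fun x : ℝ => x ^ n * Real.exp (-b * x ^ 2)) (cocompact ℝ) (𝓝 0) :=
      squeeze_zero_norm (fun x => by simp)
        (tendsto_rpow_abs_mul_exp_neg_mul_sq_cocompact hb (n : ℝ))
    simp only [Polynomial.eval_monomial, mul_assoc]
    simpa using hmonomial.const_mul a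

/-- The one-dimensional Hermite functions, not normalized; `phi m n` is the tensor product of the
`m`-th and the `n`-th one. -/
noncomputable def hermiteFun (n : ℕ) (x : ℝ) : ℝ := (H n).eval x * Real.exp (-x ^ 2 / 2)

variable (n : ℕ)

lemma hermiteFun_succ (x : ℝ) :
    hermiteFun (n + 1) x = 2 * x * hermiteFun n x - 2 * n * hermiteFun (n - 1) x := by
  simp only [hermiteFun, H_succ, Polynomial.eval_sub, Polynomial.eval_mul, Polynomial.eval_C,
    Polynomial.eval_X]
  ring

lemma hasDerivAt_hermiteFun (x : ℝ) :
    HasDerivAt (hermiteFun n) (2 * n * hermiteFun (n - 1) x - x * hermiteFun n x) x := by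
  have hexp : HasDerivAt (fun x : ℝ => Real.exp (-x ^ 2 / 2)) (Real.exp (-x ^ 2 / 2) * -x) x := by
    refine ((hasDerivAt_pow 2 x).neg.div_const 2).exp.congr_deriv ?_
    simp only [Pi.neg_apply]
    norm_num
    ring
  refine (((H n).hasDerivAt x).mul hexp).congr_deriv ?_
  simp only [hermiteFun, derivative_H, Polynomial.eval_mul, Polynomial.eval_C]
  ring

lemma tendsto_hermiteFun_cocompact : Tendsto (hermiteFun n) (cocompact ℝ) (𝓝 0) := by
  refine (tendsto_eval_mul_exp_neg_mul_sq_cocompact (H n) (one_half_pos (α := ℝ))).congr fun x => ?_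
  rw [hermiteFun]
  ring_nf

lemma integrable_hermiteFun_sq : Integrable fun x => hermiteFun n x ^ 2 := by
  refine (integrable_eval_mul_exp_neg_mul_sq (H n ^ 2) one_pos).congr (.of_forall fun x => ?_)
  simp only [hermiteFun, mul_pow, Polynomial.eval_pow, ← Real.exp_nat_mul]
  ring_nf

end Hermite

section Phi

variable (m n : ℕ)

lemma phi_apply (p : ℝ × ℝ) : phi m n p = hermiteFun m p.1 * hermiteFun n p.2 := by
  rw [phi, hermiteFun, hermiteFun, mul_mul_mul_comm, ← Real.exp_add]
  ring_nf

lemma phi_zero_zero_apply (p : ℝ × ℝ) : phi 0 0 p = Real.exp (-(p.1 ^ 2 + p.2 ^ 2) / 2) := by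
  simp [phi, H]

lemma phi_comp_swap : phi m n ∘ Prod.swap = phi n m := by
  ext p
  simp only [Function.comp_apply, phi_apply, Prod.fst_swap, Prod.snd_swap, mul_comm]

lemma hasDerivAt_phi_fst (p : ℝ × ℝ) :
    HasDerivAt (fun x => phi m n (x, p.2)) (2 * m * phi (m - 1) n p - p.1 * phi m n p) p.1 := by
  simp only [phi_apply]
  refine ((hasDerivAt_hermiteFun m p.1).mul_const _).congr_deriv ?_
  ring

lemma phi_succ_left (p : ℝ × ℝ) :
    phi (m + 1) n p = 2 * p.1 * phi m n p - 2 * m * phi (m - 1) n p := by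
  simp only [phi_apply, hermiteFun_succ]
  ring

lemma analyticOnNhd_phi : AnalyticOnNhd ℝ (phi m n) univ := by
  have heval (P : Polynomial ℝ) {f : ℝ × ℝ → ℝ} (hf : AnalyticOnNhd ℝ f univ) :
      AnalyticOnNhd ℝ (fun p => P.eval (f p)) univ := by
    simpa using hf.aeval_polynomial P
  have hexp : AnalyticOnNhd ℝ (fun p : ℝ × ℝ => Real.exp (-(p.1 ^ 2 + p.2 ^ 2) / 2)) univ := by
    intro p _
    have := analyticAt_fst (𝕜 := ℝ) (p := p)
    have := analyticAt_snd (𝕜 := ℝ) (p := p)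
    fun_prop
  exact ((heval _ analyticOnNhd_fst).mul (heval _ analyticOnNhd_snd)).mul hexp

lemma memLp_phi : MemLp (phi m n) 2 := by
  rw [memLp_two_iff_integrable_sq (analyticOnNhd_phi m n).continuous.aestronglyMeasurable]
  simp only [phi_apply, mul_pow]
  exact (integrable_hermiteFun_sq m).mul_prod (integrable_hermiteFun_sq n)

end Phi

section HermiteSpan

/-- The finite linear combinations of the functions `phi m n`, i.e. the products of a polynomial
and the Gaussian: a common domain for the ladder operators. -/
noncomputable def hermiteSpan : Submodule ℝ (ℝ × ℝ → ℝ) :=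
  Submodule.span ℝ (range fun i : ℕ × ℕ => phi i.1 i.2)

variable {u w : ℝ × ℝ → ℝ}

lemma phi_mem_hermiteSpan (m n : ℕ) : phi m n ∈ hermiteSpan :=
  Submodule.subset_span ⟨(m, n), rfl⟩

lemma eigenspace_le_hermiteSpan (ℓ : ℕ) : eigenspace ℓ ≤ hermiteSpan := by
  refine Submodule.span_le.2 ?_
  rintro - ⟨j, -, rfl⟩
  exact phi_mem_hermiteSpan _ _

lemma analyticOnNhd_of_mem_hermiteSpan (hu : u ∈ hermiteSpan) : AnalyticOnNhd ℝ u univ := by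
  induction hu using Submodule.span_induction with
  | mem _ h => obtain ⟨i, rfl⟩ := h; exact analyticOnNhd_phi _ _
  | zero => exact analyticOnNhd_const
  | add _ _ _ _ hu hw => exact hu.add hw
  | smul a _ _ hu => exact hu.const_smul

lemma continuous_of_mem_hermiteSpan (hu : u ∈ hermiteSpan) : Continuous u :=
  (analyticOnNhd_of_mem_hermiteSpan hu).continuous

lemma differentiableAt_fst_of_mem_hermiteSpan (hu : u ∈ hermiteSpan) (p : ℝ × ℝ) :
    DifferentiableAt ℝ (fun x => u (x, p.2)) p.1 :=
  (analyticOnNhd_of_mem_hermiteSpan hu p trivial).differentiableAt.comp p.1 (by fun_prop)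

lemma memLp_of_mem_hermiteSpan (hu : u ∈ hermiteSpan) : MemLp u 2 := by
  induction hu using Submodule.span_induction with
  | mem _ h => obtain ⟨i, rfl⟩ := h; exact memLp_phi _ _
  | zero => exact MemLp.zero
  | add _ _ _ _ hu hw => exact hu.add hw
  | smul a _ _ hu => exact hu.const_smul a

lemma tendsto_fst_cocompact_of_mem_hermiteSpan (hu : u ∈ hermiteSpan) (y : ℝ) :
    Tendsto (fun x => u (x, y)) (cocompact ℝ) (𝓝 0) := by
  induction hu using Submodule.span_induction with
  | mem _ h =>
    obtain ⟨⟨m, n⟩, rfl⟩ := h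
    simpa only [phi_apply, zero_mul] using (tendsto_hermiteFun_cocompact m).mul_const _
  | zero => exact tendsto_const_nhds
  | add _ _ _ _ hu hw => simpa using hu.add hw
  | smul a _ _ hu => simpa using hu.const_mul a

lemma comp_swap_mem_hermiteSpan (hu : u ∈ hermiteSpan) : u ∘ Prod.swap ∈ hermiteSpan := by
  induction hu using Submodule.span_induction with
  | mem _ h =>
    obtain ⟨i, rfl⟩ := h
    exact phi_comp_swap i.1 i.2 ▸ phi_mem_hermiteSpan i.2 i.1
  | zero => exact zero_mem _
  | add _ _ _ _ hu hw => exact add_mem hu hw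
  | smul a _ _ hu => exact Submodule.smul_mem _ a hu

lemma fst_mul_mem_hermiteSpan (hu : u ∈ hermiteSpan) : Prod.fst * u ∈ hermiteSpan := by
  induction hu using Submodule.span_induction with
  | mem _ h =>
    obtain ⟨⟨m, n⟩, rfl⟩ := h
    have : Prod.fst * phi m n = (1 / 2 : ℝ) • phi (m + 1) n + (m : ℝ) • phi (m - 1) n := by
      ext p
      simp only [Pi.mul_apply, Pi.add_apply, Pi.smul_apply, smul_eq_mul, phi_succ_left]
      ring
    rw [this]
    exact add_mem (Submodule.smul_mem _ _ (phi_mem_hermiteSpan _ _))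
      (Submodule.smul_mem _ _ (phi_mem_hermiteSpan _ _))
  | zero => simp
  | add _ _ _ _ hu hw => exact mul_add (Prod.fst : ℝ × ℝ → ℝ) _ _ ▸ add_mem hu hw
  | smul a _ _ hu => exact mul_smul_comm a (Prod.fst : ℝ × ℝ → ℝ) _ ▸ Submodule.smul_mem _ a hu

lemma snd_mul_mem_hermiteSpan (hu : u ∈ hermiteSpan) : Prod.snd * u ∈ hermiteSpan :=
  comp_swap_mem_hermiteSpan (fst_mul_mem_hermiteSpan (comp_swap_mem_hermiteSpan hu))

lemma dual_pow_mul_mem_hermiteSpan (L : StrongDual ℝ (ℝ × ℝ)) (hu : u ∈ hermiteSpan) (k : ℕ) :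
    (fun p => L p ^ k * u p) ∈ hermiteSpan := by
  induction k with
  | zero => simpa using hu
  | succ k ih =>
    convert add_mem (Submodule.smul_mem _ (L (1, 0)) (fst_mul_mem_hermiteSpan ih))
      (Submodule.smul_mem _ (L (0, 1)) (snd_mul_mem_hermiteSpan ih)) using 1
    ext p
    have hL : L p = p.1 * L (1, 0) + p.2 * L (0, 1) := by
      calc L p = L (p.1 • (1, 0) + p.2 • (0, 1)) := by simp
        _ = p.1 * L (1, 0) + p.2 * L (0, 1) := by simp only [map_add, map_smul, smul_eq_mul]
    simp only [Pi.add_apply, Pi.smul_apply, Pi.mul_apply, smul_eq_mul, pow_succ]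
    rw [hL]
    ring

end HermiteSpan

section Ladder

/-- The annihilation operator `∂ₓ + x` in the first variable. -/
noncomputable def annihilateFst (f : ℝ × ℝ → ℝ) (p : ℝ × ℝ) : ℝ :=
  deriv (fun x => f (x, p.2)) p.1 + p.1 * f p

/-- The creation operator `x - ∂ₓ` in the first variable, the adjoint of `annihilateFst`. -/
noncomputable def createFst (f : ℝ × ℝ → ℝ) (p : ℝ × ℝ) : ℝ :=
  p.1 * f p - deriv (fun x => f (x, p.2)) p.1

/-- The annihilation operator `∂_y + y` in the second variable. -/
noncomputable def annihilateSnd (f : ℝ × ℝ → ℝ) : ℝ × ℝ → ℝ :=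
  annihilateFst (f ∘ Prod.swap) ∘ Prod.swap

/-- The creation operator `y - ∂_y` in the second variable, the adjoint of `annihilateSnd`. -/
noncomputable def createSnd (f : ℝ × ℝ → ℝ) : ℝ × ℝ → ℝ :=
  createFst (f ∘ Prod.swap) ∘ Prod.swap

variable {u w g : ℝ × ℝ → ℝ} {m n ℓ : ℕ}

lemma annihilateFst_phi (m n : ℕ) : annihilateFst (phi m n) = (2 * m : ℝ) • phi (m - 1) n := by
  ext p
  rw [annihilateFst, (hasDerivAt_phi_fst m n p).deriv, Pi.smul_apply, smul_eq_mul, sub_add_cancel]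

lemma createFst_phi (m n : ℕ) : createFst (phi m n) = phi (m + 1) n := by
  ext p
  rw [createFst, (hasDerivAt_phi_fst m n p).deriv, phi_succ_left]
  ring

lemma createSnd_phi (m n : ℕ) : createSnd (phi m n) = phi m (n + 1) := by
  rw [createSnd, phi_comp_swap, createFst_phi, phi_comp_swap]

lemma annihilateFst_smul (a : ℝ) (f : ℝ × ℝ → ℝ) :
    annihilateFst (a • f) = a • annihilateFst f := by
  ext p
  simp only [annihilateFst, Pi.smul_apply, smul_eq_mul, deriv_const_mul_field]
  ring

lemma createFst_smul (a : ℝ) (f : ℝ × ℝ → ℝ) : createFst (a • f) = a • createFst f := by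
  ext p
  simp only [createFst, Pi.smul_apply, smul_eq_mul, deriv_const_mul_field]
  ring

lemma annihilateFst_add (hu : u ∈ hermiteSpan) (hw : w ∈ hermiteSpan) :
    annihilateFst (u + w) = annihilateFst u + annihilateFst w := by
  ext p
  simp only [annihilateFst, Pi.add_apply]
  rw [deriv_fun_add (differentiableAt_fst_of_mem_hermiteSpan hu p)
    (differentiableAt_fst_of_mem_hermiteSpan hw p)]
  ring

lemma createFst_add (hu : u ∈ hermiteSpan) (hw : w ∈ hermiteSpan) :
    createFst (u + w) = createFst u + createFst w := by
  ext p
  simp only [createFst, Pi.add_apply]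
  rw [deriv_fun_add (differentiableAt_fst_of_mem_hermiteSpan hu p)
    (differentiableAt_fst_of_mem_hermiteSpan hw p)]
  ring

lemma annihilateFst_mem_hermiteSpan (hu : u ∈ hermiteSpan) : annihilateFst u ∈ hermiteSpan := by
  induction hu using Submodule.span_induction with
  | mem _ h =>
    obtain ⟨i, rfl⟩ := h
    exact annihilateFst_phi i.1 i.2 ▸ Submodule.smul_mem _ _ (phi_mem_hermiteSpan _ _)
  | zero =>
    have h0 : annihilateFst 0 = 0 := by simpa using annihilateFst_smul 0 0
    rw [h0]
    exact zero_mem _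
  | add _ _ hu hw ihu ihw => exact annihilateFst_add hu hw ▸ add_mem ihu ihw
  | smul a f _ ih => exact annihilateFst_smul a f ▸ Submodule.smul_mem _ a ih

lemma createFst_eq (f : ℝ × ℝ → ℝ) :
    createFst f = (2 : ℝ) • (Prod.fst * f) - annihilateFst f := by
  ext p
  simp only [createFst, annihilateFst, Pi.sub_apply, Pi.smul_apply, Pi.mul_apply, smul_eq_mul]
  ring

lemma createFst_mem_hermiteSpan (hu : u ∈ hermiteSpan) : createFst u ∈ hermiteSpan :=
  createFst_eq u ▸ sub_mem (Submodule.smul_mem _ _ (fst_mul_mem_hermiteSpan hu))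
    (annihilateFst_mem_hermiteSpan hu)

/-- The operator `createFst ∘ annihilateFst`, twice the number operator of the first variable:
`phi m n` is an eigenfunction for the eigenvalue `2 * m`. Its analogue in the second variable is
its conjugate by `Prod.swap`. -/
noncomputable def numberFst (f : ℝ × ℝ → ℝ) : ℝ × ℝ → ℝ := createFst (annihilateFst f)

lemma numberFst_phi (m n : ℕ) : numberFst (phi m n) = (2 * m : ℝ) • phi m n := by
  rw [numberFst, annihilateFst_phi, createFst_smul, createFst_phi]
  cases m <;> simp

lemma numberFst_smul (a : ℝ) (f : ℝ × ℝ → ℝ) : numberFst (a • f) = a • numberFst f := by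
  rw [numberFst, annihilateFst_smul, createFst_smul, numberFst]

lemma numberFst_add (hu : u ∈ hermiteSpan) (hw : w ∈ hermiteSpan) :
    numberFst (u + w) = numberFst u + numberFst w := by
  rw [numberFst, annihilateFst_add hu hw, createFst_add (annihilateFst_mem_hermiteSpan hu)
    (annihilateFst_mem_hermiteSpan hw), numberFst, numberFst]

lemma numberFst_add_numberFst_swap_of_mem_eigenspace (hu : u ∈ eigenspace ℓ) :
    numberFst u + numberFst (u ∘ Prod.swap) ∘ Prod.swap = (2 * ℓ : ℝ) • u := by
  induction hu using Submodule.span_induction with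
  | mem _ h =>
    obtain ⟨j, hj, rfl⟩ := h
    rw [phi_comp_swap, numberFst_phi, numberFst_phi, Pi.smul_comp, phi_comp_swap, ← add_smul,
      Nat.cast_sub hj]
    ring_nf
  | zero =>
    have h0 : numberFst 0 = 0 := by simpa using numberFst_smul 0 0
    rw [smul_zero, Pi.zero_comp, h0, Pi.zero_comp, add_zero]
  | add f h hf hh ihf ihh =>
    have hf := eigenspace_le_hermiteSpan ℓ hf
    have hh := eigenspace_le_hermiteSpan ℓ hh
    rw [smul_add, ← ihf, ← ihh, numberFst_add hf hh, Pi.add_comp, numberFst_add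
      (comp_swap_mem_hermiteSpan hf) (comp_swap_mem_hermiteSpan hh), Pi.add_comp,
      add_add_add_comm]
  | smul a f _ ih =>
    rw [smul_comm, ← ih, Pi.smul_comp, numberFst_smul, numberFst_smul, Pi.smul_comp, smul_add]

lemma integral_comp_swap (f : ℝ × ℝ → ℝ) : ∫ p : ℝ × ℝ, f p.swap = ∫ p, f p := by
  rw [Measure.volume_eq_prod, integral_prod_swap]

lemma integrable_mul_of_mem_hermiteSpan (hu : u ∈ hermiteSpan) (hw : w ∈ hermiteSpan) :
    Integrable fun p => u p * w p :=
  (memLp_of_mem_hermiteSpan hu).integrable_mul (memLp_of_mem_hermiteSpan hw)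

lemma integral_mul_annihilateFst_mul (hu : u ∈ hermiteSpan) (hw : w ∈ hermiteSpan)
    (hg : g ∈ nodalMultipliers u) :
    ∫ p, g p * (annihilateFst u p * w p) = ∫ p, g p * (u p * createFst w p) := by
  have hAnn := integrable_mul_of_mem_hermiteSpan (annihilateFst_mem_hermiteSpan hu) hw
  have hCre := integrable_mul_of_mem_hermiteSpan hu (createFst_mem_hermiteSpan hw)
  have hderiv (p : ℝ × ℝ) : HasDerivAt (fun x => u (x, p.2) * w (x, p.2))
      (annihilateFst u p * w p - u p * createFst w p) p.1 := by
    refine ((differentiableAt_fst_of_mem_hermiteSpan hu p).hasDerivAt.mul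
      (differentiableAt_fst_of_mem_hermiteSpan hw p).hasDerivAt).congr_deriv ?_
    rw [annihilateFst, createFst]
    ring
  have hlim (y : ℝ) : Tendsto (fun x => u (x, y) * w (x, y)) (cocompact ℝ) (𝓝 0) := by
    simpa using (tendsto_fst_cocompact_of_mem_hermiteSpan hu y).mul
      (tendsto_fst_cocompact_of_mem_hermiteSpan hw y)
  have hguw : g ∈ nodalMultipliers fun p => u p * w p :=
    nodalMultipliers_mono (fun p hp => by rw [hp, zero_mul]) hg
  have hIBP : ∫ p, g p * (annihilateFst u p * w p - u p * createFst w p) = 0 :=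
    integral_mul_deriv_fst_eq_zero hderiv (hAnn.sub hCre) hlim hguw
  simp only [mul_sub] at hIBP
  rwa [integral_sub (integrable_mul_of_mem_nodalMultipliers hg hAnn)
    (integrable_mul_of_mem_nodalMultipliers hg hCre), sub_eq_zero] at hIBP

lemma integral_mul_annihilateSnd_mul (hu : u ∈ hermiteSpan) (hw : w ∈ hermiteSpan)
    (hg : g ∈ nodalMultipliers u) :
    ∫ p, g p * (annihilateSnd u p * w p) = ∫ p, g p * (u p * createSnd w p) := by
  have hswap := integral_mul_annihilateFst_mul (comp_swap_mem_hermiteSpan hu)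
    (comp_swap_mem_hermiteSpan hw) (comp_mem_nodalMultipliers hg measurable_swap continuous_swap)
  rw [← integral_comp_swap, ← integral_comp_swap fun p => g p * (u p * _)]
  exact hswap

lemma integral_annihilateFst_mul (hu : u ∈ hermiteSpan) (hw : w ∈ hermiteSpan) :
    ∫ p, annihilateFst u p * w p = ∫ p, u p * createFst w p := by
  simpa only [Pi.one_apply, one_mul] using integral_mul_annihilateFst_mul hu hw (one_mem _)

lemma integral_mul_numberFst (hu : u ∈ hermiteSpan) (hw : w ∈ hermiteSpan) :
    ∫ p, u p * numberFst w p = ∫ p, annihilateFst u p * annihilateFst w p :=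
  (integral_annihilateFst_mul hu (annihilateFst_mem_hermiteSpan hw)).symm

lemma integral_mul_numberFst_comm (hu : u ∈ hermiteSpan) (hw : w ∈ hermiteSpan) :
    ∫ p, u p * numberFst w p = ∫ p, w p * numberFst u p := by
  rw [integral_mul_numberFst hu hw, integral_mul_numberFst hw hu]
  exact integral_congr_ae (.of_forall fun p => mul_comm _ _)

lemma integral_phi_mul_phi_eq_zero_of_ne_left {m m' : ℕ} (h : m ≠ m') (n n' : ℕ) :
    ∫ p, phi m n p * phi m' n' p = 0 := by
  have hnumber (k l k' l' : ℕ) : ∫ p, phi k l p * numberFst (phi k' l') p =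
      2 * k' * ∫ p, phi k l p * phi k' l' p := by
    simp only [numberFst_phi, Pi.smul_apply, smul_eq_mul, mul_left_comm _ (2 * _ : ℝ),
      integral_const_mul]
  have hcomm := integral_mul_numberFst_comm (phi_mem_hermiteSpan m n) (phi_mem_hermiteSpan m' n')
  rw [hnumber, hnumber, integral_congr_ae (.of_forall fun p => mul_comm (phi m' n' p) _)] at hcomm
  have hne : (2 * m' : ℝ) ≠ 2 * m := by simpa using h.symm
  by_contra h0
  exact hne (mul_right_cancel₀ h0 hcomm)

lemma integral_phi_mul_phi_swap (m n m' n' : ℕ) :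
    ∫ p, phi m n p * phi m' n' p = ∫ p, phi n m p * phi n' m' p := by
  rw [← integral_comp_swap, ← phi_comp_swap m n, ← phi_comp_swap m' n']
  rfl

lemma integral_phi_mul_phi_eq_zero {i j : ℕ × ℕ} (h : i ≠ j) :
    ∫ p, phi i.1 i.2 p * phi j.1 j.2 p = 0 := by
  by_cases h1 : i.1 = j.1
  · rw [integral_phi_mul_phi_swap]
    exact integral_phi_mul_phi_eq_zero_of_ne_left (fun h2 => h (Prod.ext h1 h2)) _ _
  · exact integral_phi_mul_phi_eq_zero_of_ne_left h1 _ _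

lemma integral_phi_succ_sq (m n : ℕ) :
    ∫ p, phi (m + 1) n p ^ 2 = 2 * (m + 1) * ∫ p, phi m n p ^ 2 := by
  have h := integral_annihilateFst_mul (phi_mem_hermiteSpan (m + 1) n) (phi_mem_hermiteSpan m n)
  rw [annihilateFst_phi, createFst_phi] at h
  simp only [Pi.smul_apply, smul_eq_mul, mul_assoc, integral_const_mul, ← sq,
    Nat.cast_add_one, Nat.add_sub_cancel] at h
  rw [← h]
  ring

lemma integral_phi_sq_swap (m n : ℕ) : ∫ p, phi m n p ^ 2 = ∫ p, phi n m p ^ 2 := by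
  simpa only [sq] using integral_phi_mul_phi_swap m n m n

lemma integral_phi_sq_pos (m n : ℕ) : 0 < ∫ p, phi m n p ^ 2 := by
  induction m generalizing n with
  | succ m ih =>
    rw [integral_phi_succ_sq]
    have := ih n
    positivity
  | zero =>
    rw [integral_phi_sq_swap]
    induction n with
    | succ n ih =>
      rw [integral_phi_succ_sq]
      positivity
    | zero =>
      have h := (memLp_phi 0 0).integrable_sq
      simp only [phi_zero_zero_apply, ← Real.exp_nat_mul] at h ⊢
      exact integral_exp_pos h

lemma integral_mul_annihilateFst_sq (hu : u ∈ hermiteSpan) (hg : g ∈ nodalMultipliers u) :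
    ∫ p, (g p * annihilateFst u p) ^ 2 = ∫ p, g p ^ 2 * (u p * numberFst u p) := by
  simp only [mul_pow, sq (annihilateFst u _)]
  exact integral_mul_annihilateFst_mul hu (annihilateFst_mem_hermiteSpan hu) (pow_mem hg 2)

lemma integral_mul_annihilateSnd_sq (hu : u ∈ hermiteSpan) (hg : g ∈ nodalMultipliers u) :
    ∫ p, (g p * annihilateSnd u p) ^ 2 =
      ∫ p, g p ^ 2 * (u p * (numberFst (u ∘ Prod.swap) ∘ Prod.swap) p) := by
  have hswap := integral_mul_annihilateFst_sq (comp_swap_mem_hermiteSpan hu)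
    (comp_mem_nodalMultipliers hg measurable_swap continuous_swap)
  rw [← integral_comp_swap, ← integral_comp_swap fun p => g p ^ 2 * _]
  exact hswap

lemma integral_mul_annihilateFst_sq_add_integral_mul_annihilateSnd_sq (hu : u ∈ eigenspace ℓ)
    (hg : g ∈ nodalMultipliers u) :
    (∫ p, (g p * annihilateFst u p) ^ 2) + ∫ p, (g p * annihilateSnd u p) ^ 2 =
      2 * ℓ * ∫ p, (g p * u p) ^ 2 := by
  have huW := eigenspace_le_hermiteSpan ℓ hu
  have hint {w : ℝ × ℝ → ℝ} (hw : w ∈ hermiteSpan) : Integrable fun p => g p ^ 2 * (u p * w p) :=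
    integrable_mul_of_mem_nodalMultipliers (pow_mem hg 2) (integrable_mul_of_mem_hermiteSpan huW hw)
  have hnum {w : ℝ × ℝ → ℝ} (hw : w ∈ hermiteSpan) : numberFst w ∈ hermiteSpan :=
    createFst_mem_hermiteSpan (annihilateFst_mem_hermiteSpan hw)
  rw [integral_mul_annihilateFst_sq huW hg, integral_mul_annihilateSnd_sq huW hg, ← integral_add
    (hint (hnum huW)) (hint (comp_swap_mem_hermiteSpan (hnum (comp_swap_mem_hermiteSpan huW)))),
    ← integral_const_mul]
  congr with p
  have hp : numberFst u p + (numberFst (u ∘ Prod.swap) ∘ Prod.swap) p = 2 * ℓ * u p :=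
    congrFun (numberFst_add_numberFst_swap_of_mem_eigenspace hu) p
  linear_combination g p ^ 2 * u p * hp

end Ladder

section Completeness

variable {f : ℝ × ℝ → ℝ}

lemma memLp_phi_zero_zero_mul_exp_abs (L : StrongDual ℝ (ℝ × ℝ)) :
    MemLp (fun p => phi 0 0 p * Real.exp |L p|) 2 := by
  simp only [phi_zero_zero_apply]
  rw [memLp_two_iff_integrable_sq (by fun_prop)]
  have hgauss : Integrable fun p : ℝ × ℝ =>
      Real.exp (-(1 / 2) * p.1 ^ 2) * Real.exp (-(1 / 2) * p.2 ^ 2) :=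
    (integrable_exp_neg_mul_sq one_half_pos).mul_prod (integrable_exp_neg_mul_sq one_half_pos)
  refine (hgauss.const_mul (Real.exp (4 * ‖L‖ ^ 2))).mono' (by fun_prop) (.of_forall fun p => ?_)
  have hL : |L p| ≤ ‖L‖ * |p.1| + ‖L‖ * |p.2| := by
    have hmax : ‖p‖ ≤ |p.1| + |p.2| := max_le_add_of_nonneg (abs_nonneg _) (abs_nonneg _)
    calc |L p| ≤ ‖L‖ * ‖p‖ := L.le_opNorm p
      _ ≤ ‖L‖ * (|p.1| + |p.2|) := by gcongr
      _ = ‖L‖ * |p.1| + ‖L‖ * |p.2| := mul_add _ _ _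
  rw [Real.norm_of_nonneg (by positivity), ← Real.exp_add, ← Real.exp_nat_mul, ← Real.exp_add,
    ← Real.exp_add, Real.exp_le_exp]
  push_cast
  nlinarith [sq_nonneg (2 * ‖L‖ - |p.1|), sq_nonneg (2 * ‖L‖ - |p.2|), sq_abs p.1, sq_abs p.2]

lemma integral_mul_eq_zero_of_mem_hermiteSpan (hf : MemLp f 2)
    (h : ∀ m n, ∫ p, f p * phi m n p = 0) {w : ℝ × ℝ → ℝ} (hw : w ∈ hermiteSpan) :
    ∫ p, f p * w p = 0 := by
  have hint {w : ℝ × ℝ → ℝ} (hw : w ∈ hermiteSpan) : Integrable fun p => f p * w p :=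
    hf.integrable_mul (memLp_of_mem_hermiteSpan hw)
  induction hw using Submodule.span_induction with
  | mem _ hw => obtain ⟨i, rfl⟩ := hw; exact h i.1 i.2
  | zero => simp
  | add v w hv hw ihv ihw =>
    simp only [Pi.add_apply, mul_add]
    rw [integral_add (hint hv) (hint hw), ihv, ihw, add_zero]
  | smul a w _ ih =>
    simp only [Pi.smul_apply, smul_eq_mul, mul_left_comm _ a, integral_const_mul, ih, mul_zero]

lemma ae_eq_zero_of_forall_integral_mul_phi_eq_zero (hf : MemLp f 2)
    (h : ∀ m n, ∫ p, f p * phi m n p = 0) : f =ᵐ[volume] 0 := by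
  have hprod : (fun p => f p * phi 0 0 p) =ᵐ[volume] 0 := by
    refine ae_eq_zero_of_forall_integral_mul_pow_eq_zero (fun L => ?_) fun L k => ?_
    · simp only [mul_assoc]
      exact hf.integrable_mul (memLp_phi_zero_zero_mul_exp_abs L)
    · simpa only [mul_assoc, mul_comm] using integral_mul_eq_zero_of_mem_hermiteSpan hf h
        (dual_pow_mul_mem_hermiteSpan L (phi_mem_hermiteSpan 0 0) k)
  filter_upwards [hprod] with p hp
  rw [phi_zero_zero_apply] at hp
  exact (mul_eq_zero.1 hp).resolve_right (Real.exp_pos _).ne'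

end Completeness

section Parseval

variable {f : ℝ × ℝ → ℝ}

lemma inner_toLp {α : Type*} [MeasurableSpace α] {μ : Measure α} {f g : α → ℝ} (hf : MemLp f 2 μ)
    (hg : MemLp g 2 μ) : inner ℝ (hf.toLp f) (hg.toLp g) = ∫ p, f p * g p ∂μ := by
  rw [L2.inner_def]
  refine integral_congr_ae ?_
  filter_upwards [hf.coeFn_toLp, hg.coeFn_toLp] with p hfp hgp
  rw [hfp, hgp]
  exact mul_comm _ _

/-- The functions `phi m n`, normalized in `L²`. -/
noncomputable def phiLp (i : ℕ × ℕ) : Lp ℝ 2 (volume : Measure (ℝ × ℝ)) :=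
  (√(∫ p, phi i.1 i.2 p ^ 2))⁻¹ • (memLp_phi i.1 i.2).toLp _

lemma orthonormal_phiLp : Orthonormal ℝ phiLp := by
  classical
  refine orthonormal_iff_ite.2 fun i j => ?_
  rw [phiLp, phiLp, real_inner_smul_left, real_inner_smul_right, inner_toLp]
  split_ifs with hij
  · subst hij
    have hpos := integral_phi_sq_pos i.1 i.2
    simp only [← sq]
    rw [← mul_assoc, ← mul_inv, Real.mul_self_sqrt hpos.le, inv_mul_cancel₀ hpos.ne']
  · rw [integral_phi_mul_phi_eq_zero hij, mul_zero, mul_zero]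

lemma inner_toLp_phiLp (hf : MemLp f 2) (i : ℕ × ℕ) :
    inner ℝ (hf.toLp f) (phiLp i) =
      (√(∫ p, phi i.1 i.2 p ^ 2))⁻¹ * ∫ p, f p * phi i.1 i.2 p := by
  rw [phiLp, real_inner_smul_right, inner_toLp]

lemma orthogonal_span_range_phiLp : (Submodule.span ℝ (range phiLp))ᗮ = ⊥ := by
  refine (Submodule.eq_bot_iff _).2 fun f hf => ?_
  have hmem := Lp.memLp f
  have hzero : f =ᵐ[volume] 0 := by
    refine ae_eq_zero_of_forall_integral_mul_phi_eq_zero hmem fun m n => ?_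
    have hinner := inner_toLp_phiLp hmem (m, n)
    rw [Lp.toLp_coeFn, Submodule.inner_left_of_mem_orthogonal
      (Submodule.subset_span (mem_range_self (m, n))) hf] at hinner
    exact (mul_eq_zero.1 hinner.symm).resolve_left
      (inv_ne_zero (Real.sqrt_pos.2 (integral_phi_sq_pos m n)).ne')
  exact (Lp.eq_zero_iff_ae_eq_zero).2 hzero

/-- The mass that the component of `f` along `phi i.1 i.2` contributes to `∫ f²`. -/
noncomputable def spectralWeight (f : ℝ × ℝ → ℝ) (i : ℕ × ℕ) : ℝ :=
  (∫ p, f p * phi i.1 i.2 p) ^ 2 / ∫ p, phi i.1 i.2 p ^ 2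

lemma spectralWeight_nonneg (f : ℝ × ℝ → ℝ) (i : ℕ × ℕ) : 0 ≤ spectralWeight f i :=
  div_nonneg (sq_nonneg _) (integral_phi_sq_pos _ _).le

lemma spectralWeight_eq_zero_iff {i : ℕ × ℕ} :
    spectralWeight f i = 0 ↔ ∫ p, f p * phi i.1 i.2 p = 0 := by
  simp [spectralWeight, (integral_phi_sq_pos i.1 i.2).ne']

lemma hasSum_spectralWeight (hf : MemLp f 2) : HasSum (spectralWeight f) (∫ p, f p ^ 2) := by
  have hsum := (HilbertBasis.mkOfOrthogonalEqBot orthonormal_phiLp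
    orthogonal_span_range_phiLp).hasSum_inner_mul_inner (hf.toLp f) (hf.toLp f)
  rw [HilbertBasis.coe_mkOfOrthogonalEqBot, inner_toLp] at hsum
  simp only [← sq] at hsum
  refine hsum.congr_fun fun i => ?_
  rw [real_inner_comm (hf.toLp f), inner_toLp_phiLp, ← sq, mul_pow, inv_pow, Real.sq_sqrt
    (integral_phi_sq_pos _ _).le, spectralWeight, div_eq_inv_mul]

end Parseval

section Spectral

variable {u f g A : ℝ × ℝ → ℝ} {ℓ m n : ℕ}

lemma memLp_comp_swap (hf : MemLp f 2) : MemLp (f ∘ Prod.swap) 2 :=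
  hf.comp_measurePreserving Measure.measurePreserving_swap

lemma spectralWeight_comp_swap (f : ℝ × ℝ → ℝ) (i : ℕ × ℕ) :
    spectralWeight (f ∘ Prod.swap) i = spectralWeight f i.swap := by
  rw [spectralWeight, spectralWeight, integral_phi_sq_swap, ← integral_comp_swap,
    ← phi_comp_swap i.2 i.1]
  rfl

/-- Raising the index multiplies the squared norm of `phi` by `2 * (m + 1)`, which is how the
eigenvalues of the number operator enter as factors of the spectral weights. -/
lemma hasSum_fst_mul_spectralWeight (hA : MemLp A 2)
    (hAf : ∀ m n, ∫ p, A p * phi m n p = ∫ p, f p * phi (m + 1) n p) :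
    HasSum (fun i : ℕ × ℕ => 2 * i.1 * spectralWeight f i) (∫ p, A p ^ 2) := by
  have hraise : Function.Injective fun i : ℕ × ℕ => (i.1 + 1, i.2) := by
    intro i j hij
    simpa [Prod.ext_iff] using hij
  refine (hraise.hasSum_iff fun i hi => ?_).1 ?_
  · obtain ⟨_ | m, n⟩ := i
    · simp
    · exact absurd ⟨(m, n), rfl⟩ hi
  · refine (hasSum_spectralWeight hA).congr_fun fun i => ?_
    have := (integral_phi_sq_pos i.1 i.2).ne'
    simp only [Function.comp_apply, spectralWeight, hAf, integral_phi_succ_sq]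
    push_cast
    field_simp

lemma hasSum_snd_mul_spectralWeight (hA : MemLp A 2)
    (hAf : ∀ m n, ∫ p, A p * phi m n p = ∫ p, f p * phi m (n + 1) p) :
    HasSum (fun i : ℕ × ℕ => 2 * i.2 * spectralWeight f i) (∫ p, A p ^ 2) := by
  have hswap : HasSum (fun i : ℕ × ℕ => 2 * i.1 * spectralWeight (f ∘ Prod.swap) i)
      (∫ p, (A ∘ Prod.swap) p ^ 2) := by
    refine hasSum_fst_mul_spectralWeight (memLp_comp_swap hA) fun m n => ?_
    rw [← phi_comp_swap n m, ← phi_comp_swap n (m + 1)]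
    exact (integral_comp_swap fun p => A p * phi n m p).trans
      ((hAf n m).trans (integral_comp_swap fun p => f p * phi n (m + 1) p).symm)
  rw [← integral_comp_swap, ← (Equiv.prodComm ℕ ℕ).hasSum_iff]
  simp only [spectralWeight_comp_swap] at hswap
  exact hswap

lemma hasSum_energy_mul_spectralWeight (hu : u ∈ hermiteSpan) (hg : g ∈ nodalMultipliers u) :
    HasSum (fun i : ℕ × ℕ => 2 * (i.1 + i.2) * spectralWeight (g * u) i)
      ((∫ p, (g p * annihilateFst u p) ^ 2) + ∫ p, (g p * annihilateSnd u p) ^ 2) := by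
  have hFst : MemLp (g * annihilateFst u) 2 := memLp_mul_of_mem_nodalMultipliers hg
    (memLp_of_mem_hermiteSpan (annihilateFst_mem_hermiteSpan hu))
  have hSnd : MemLp (g * annihilateSnd u) 2 := memLp_mul_of_mem_nodalMultipliers hg (memLp_comp_swap
    (memLp_of_mem_hermiteSpan (annihilateFst_mem_hermiteSpan (comp_swap_mem_hermiteSpan hu))))
  refine ((hasSum_fst_mul_spectralWeight (f := g * u) hFst fun m n => ?_).add
    (hasSum_snd_mul_spectralWeight (f := g * u) hSnd fun m n => ?_)).congr_fun fun i => ?_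
  · simpa only [Pi.mul_apply, mul_assoc, createFst_phi] using
      integral_mul_annihilateFst_mul hu (phi_mem_hermiteSpan m n) hg
  · simpa only [Pi.mul_apply, mul_assoc, createSnd_phi] using
      integral_mul_annihilateSnd_mul hu (phi_mem_hermiteSpan m n) hg
  · ring

lemma integral_mul_phi_eq_zero_of_energy (hu : u ∈ eigenspace ℓ) (hg : g ∈ nodalMultipliers u)
    (hlow : ∀ m n, m + n < ℓ → ∫ p, (g * u) p * phi m n p = 0) (hmn : m + n ≠ ℓ) :
    ∫ p, (g * u) p * phi m n p = 0 := by
  have huW := eigenspace_le_hermiteSpan ℓ hu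
  have henergy := hasSum_energy_mul_spectralWeight huW hg
  have hnorm : HasSum (fun i => 2 * ℓ * spectralWeight (g * u) i)
      (2 * ℓ * ∫ p, (g p * u p) ^ 2) :=
    (hasSum_spectralWeight
      (memLp_mul_of_mem_nodalMultipliers hg (memLp_of_mem_hermiteSpan huW))).mul_left _
  have hexcess := henergy.sub hnorm
  rw [integral_mul_annihilateFst_sq_add_integral_mul_annihilateSnd_sq hu hg, sub_self] at hexcess
  simp only [← sub_mul, ← mul_sub] at hexcess
  have hnonneg (i : ℕ × ℕ) : 0 ≤ 2 * (i.1 + i.2 - ℓ : ℝ) * spectralWeight (g * u) i := by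
    rcases lt_or_ge (i.1 + i.2) ℓ with hi | hi
    · rw [spectralWeight_eq_zero_iff.2 (hlow _ _ hi), mul_zero]
    · have : (ℓ : ℝ) ≤ i.1 + i.2 := by exact_mod_cast hi
      exact mul_nonneg (by linarith) (spectralWeight_nonneg _ _)
  have hzero := congrFun ((hasSum_zero_iff_of_nonneg hnonneg).1 hexcess) (m, n)
  have hne : 2 * (m + n - ℓ : ℝ) ≠ 0 :=
    mul_ne_zero two_ne_zero (sub_ne_zero.2 (by exact_mod_cast hmn))
  exact spectralWeight_eq_zero_iff.1 ((mul_eq_zero.1 hzero).resolve_left hne)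

lemma phi_mem_eigenspace (h : m + n = ℓ) : phi m n ∈ eigenspace ℓ :=
  Submodule.subset_span ⟨n, by omega, by rw [← h, Nat.add_sub_cancel]⟩

lemma exists_mem_eigenspace_integral_mul_phi_eq (f : ℝ × ℝ → ℝ) (ℓ : ℕ) :
    ∃ w ∈ eigenspace ℓ, ∀ m n,
      ∫ p, w p * phi m n p = if m + n = ℓ then ∫ p, f p * phi m n p else 0 := by
  let c (i : ℕ × ℕ) : ℝ := (∫ p, f p * phi i.1 i.2 p) / ∫ p, phi i.1 i.2 p ^ 2
  refine ⟨∑ i ∈ Finset.HasAntidiagonal.antidiagonal ℓ, c i • phi i.1 i.2,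
    Submodule.sum_mem _ fun i hi => Submodule.smul_mem _ _
      (phi_mem_eigenspace (Finset.HasAntidiagonal.mem_antidiagonal.1 hi)), fun m n => ?_⟩
  have hterm (i : ℕ × ℕ) : ∫ p, c i * (phi i.1 i.2 p * phi m n p) =
      if (m, n) = i then ∫ p, f p * phi m n p else 0 := by
    rw [integral_const_mul]
    split_ifs with hi
    · subst hi
      simp only [c, ← sq, div_mul_cancel₀ _ (integral_phi_sq_pos m n).ne']
    · rw [integral_phi_mul_phi_eq_zero (j := (m, n)) (Ne.symm hi), mul_zero]
  simp only [Finset.sum_apply, Pi.smul_apply, smul_eq_mul, Finset.sum_mul, mul_assoc]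
  rw [integral_finsetSum _ fun i _ => (integrable_mul_of_mem_hermiteSpan (phi_mem_hermiteSpan _ _)
    (phi_mem_hermiteSpan _ _)).const_mul _]
  simp only [hterm, Finset.sum_ite_eq, Finset.HasAntidiagonal.mem_antidiagonal]

lemma mem_eigenspace_of_forall_integral_mul_phi_eq_zero (hf : MemLp f 2) (hcont : Continuous f)
    (h : ∀ m n, m + n ≠ ℓ → ∫ p, f p * phi m n p = 0) : f ∈ eigenspace ℓ := by
  obtain ⟨w, hw, hcoeff⟩ := exists_mem_eigenspace_integral_mul_phi_eq f ℓ
  have hwW := eigenspace_le_hermiteSpan ℓ hw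
  have hae : f - w =ᵐ[volume] 0 := by
    refine ae_eq_zero_of_forall_integral_mul_phi_eq_zero (hf.sub (memLp_of_mem_hermiteSpan hwW))
      fun m n => ?_
    have hfφ : Integrable fun p => f p * phi m n p := hf.integrable_mul (memLp_phi m n)
    simp only [Pi.sub_apply, sub_mul]
    rw [integral_sub hfφ (integrable_mul_of_mem_hermiteSpan hwW (phi_mem_hermiteSpan m n)), hcoeff]
    split_ifs with hmn
    exacts [sub_self _, by rw [h m n hmn, sub_zero]]
  have heq : f - w = 0 := (Continuous.ae_eq_iff_eq volume
    (hcont.sub (continuous_of_mem_hermiteSpan hwW)) continuous_zero).1 hae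
  exact sub_eq_zero.1 heq ▸ hw

lemma mul_mem_eigenspace (hu : u ∈ eigenspace ℓ) (hg : g ∈ nodalMultipliers u)
    (hlow : ∀ m n, m + n < ℓ → ∫ p, (g * u) p * phi m n p = 0) : g * u ∈ eigenspace ℓ := by
  have huW := eigenspace_le_hermiteSpan ℓ hu
  exact mem_eigenspace_of_forall_integral_mul_phi_eq_zero
    (memLp_mul_of_mem_nodalMultipliers hg (memLp_of_mem_hermiteSpan huW))
    (continuous_mul_of_mem_nodalMultipliers hg (continuous_of_mem_hermiteSpan huW))
    fun _ _ => integral_mul_phi_eq_zero_of_energy hu hg hlow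

end Spectral

section Courant

variable {u g : ℝ × ℝ → ℝ} {ℓ : ℕ} {D : Set (ℝ × ℝ)}

/-- The indices `(m, n)` of the modes `phi m n` of energy lower than that of `eigenspace ℓ`. -/
def lowModes (ℓ : ℕ) : Finset (ℕ × ℕ) :=
  (Finset.range ℓ).biUnion Finset.HasAntidiagonal.antidiagonal

lemma mem_lowModes {i : ℕ × ℕ} : i ∈ lowModes ℓ ↔ i.1 + i.2 < ℓ := by
  simp [lowModes]

lemma card_lowModes (ℓ : ℕ) : (lowModes ℓ).card = ℓ * (ℓ + 1) / 2 := by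
  have hdisj : (Finset.range ℓ : Set ℕ).PairwiseDisjoint Finset.HasAntidiagonal.antidiagonal :=
    fun _ _ _ _ hkl => Finset.disjoint_left.2 fun i hk hl => hkl
      ((Finset.HasAntidiagonal.mem_antidiagonal.1 hk).symm.trans
        (Finset.HasAntidiagonal.mem_antidiagonal.1 hl))
  have hsum := Finset.sum_range_succ' id ℓ
  simp only [id_eq, add_zero, Finset.sum_range_id, Nat.add_sub_cancel] at hsum
  simp only [lowModes, Finset.card_biUnion hdisj, Finset.Nat.card_antidiagonal, ← hsum, mul_comm]

lemma mul_eq_zero_of_eqOn_zero_nodalDomain (hu : u ∈ eigenspace ℓ) (hg : g ∈ nodalMultipliers u)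
    (hlow : ∀ m n, m + n < ℓ → ∫ p, (g * u) p * phi m n p = 0) (hD : D ∈ nodalDomains u)
    (hgD : EqOn g 0 D) : g * u = 0 := by
  have huW := eigenspace_le_hermiteSpan ℓ hu
  have hanalytic := analyticOnNhd_of_mem_hermiteSpan
    (eigenspace_le_hermiteSpan ℓ (mul_mem_eigenspace hu hg hlow))
  obtain ⟨p, hp⟩ := nonempty_of_mem_nodalDomains hD
  refine hanalytic.eq_of_eventuallyEq analyticOnNhd_const (z₀ := p) ?_
  filter_upwards [(isOpen_of_mem_nodalDomains (continuous_of_mem_hermiteSpan huW) hD).mem_nhds hp]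
    with q hq
  rw [Pi.mul_apply, hgD hq, Pi.zero_apply, zero_mul]

/-- A linear relation yields a combination of the restrictions of `u` to nodal domains other than
`D` that is orthogonal to all lower modes. It therefore stays in `eigenspace ℓ`, yet vanishes on
`D`. -/
lemma linearIndepOn_integral_indicator_mul (hu : u ∈ eigenspace ℓ) (hD : D ∈ nodalDomains u) :
    LinearIndepOn ℝ
      (fun (C : Set (ℝ × ℝ)) (i : lowModes ℓ) => ∫ p, C.indicator 1 p * (u p * phi i.1.1 i.1.2 p))
      (nodalDomains u \ {D}) := by
  classical
  have huW := eigenspace_le_hermiteSpan ℓ hu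
  refine linearIndepOn_iff'.2 fun s a hs hrel C hC => ?_
  have hsu : ↑s ⊆ nodalDomains u := hs.trans sdiff_subset
  have hind {C} (hC : C ∈ s) := indicator_one_mem_nodalMultipliers
    (continuous_of_mem_hermiteSpan huW) (hsu hC)
  let g : ℝ × ℝ → ℝ := ∑ C ∈ s, a C • C.indicator 1
  have hg : g ∈ nodalMultipliers u :=
    sum_mem fun C hC => Subalgebra.smul_mem _ (hind hC) _
  have hval {E p} (hE : E ∈ nodalDomains u) (hp : p ∈ E) : g p = if E ∈ s then a E else 0 :=
    sum_smul_indicator_nodalDomains_apply hsu a hE hp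
  have hgD : EqOn g 0 D := fun p hp => (hval hD hp).trans (if_neg fun h => (hs h).2 rfl)
  have hlow m n (hmn : m + n < ℓ) : ∫ p, (g * u) p * phi m n p = 0 := by
    have := congrFun hrel ⟨(m, n), mem_lowModes.2 hmn⟩
    simp only [Finset.sum_apply, Pi.smul_apply, smul_eq_mul, Pi.zero_apply] at this
    simp only [g, Pi.mul_apply, Finset.sum_apply, Pi.smul_apply, smul_eq_mul, Finset.sum_mul,
      mul_assoc]
    rw [integral_finsetSum _ fun C hC => (integrable_mul_of_mem_nodalMultipliers (hind hC)
      (integrable_mul_of_mem_hermiteSpan huW (phi_mem_hermiteSpan m n))).const_mul _]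
    simpa only [integral_const_mul] using this
  obtain ⟨p, hp⟩ := nonempty_of_mem_nodalDomains (hsu hC)
  have hgu := congrFun (mul_eq_zero_of_eqOn_zero_nodalDomain hu hg hlow hD hgD) p
  rw [Pi.mul_apply, hval (hsu hC) hp, if_pos hC] at hgu
  exact (mul_eq_zero.1 hgu).resolve_right (ne_zero_of_mem_nodalDomains (hsu hC) hp)

lemma encard_nodalDomains_le (hu : u ∈ eigenspace ℓ) :
    (nodalDomains u).encard ≤ (ℓ * (ℓ + 1) / 2 + 1 : ℕ) := by
  obtain hempty | ⟨D, hD⟩ := (nodalDomains u).eq_empty_or_nonempty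
  · simp [hempty]
  have hrank := (linearIndepOn_integral_indicator_mul hu hD).encard_le_toENat_rank
  rw [rank_fun', Fintype.card_coe, card_lowModes, map_natCast] at hrank
  rw [← encard_sdiff_singleton_add_one hD, Nat.cast_add, Nat.cast_one]
  gcongr

end Courant

/-- **Courant's theorem \eqref{courant1}.** Every nonzero eigenfunction
`u ∈ E_ℓ` of the 2D isotropic quantum harmonic oscillator has at most
`ℓ(ℓ+1)/2 + 1` nodal domains. -/
theorem courant_bound (ℓ : ℕ) (u : ℝ × ℝ → ℝ) (hu : u ∈ eigenspace ℓ) (hu0 : u ≠ 0) :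
    mu u ≤ ℓ * (ℓ + 1) / 2 + 1 :=
  ENat.toNat_le_of_le_natCast (encard_nodalDomains_le hu)
end
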